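/- arXiv:1706.01282 — 6 statements merged into one kernel-verified Lean document; each statement's English description precedes it below -/
import Mathlib

section
/- Fix an integer P ≥ 2 and integers p, q ≥ 0. There is a constant C = C(p,q,P) such that for every β > 0, every δ > 0, and all functions f, g : [0,∞) → ℂ, one has ‖f g‖_{β,δ,p+q} ≤ C ‖f‖_{β,δ,p} ‖g‖_{β,δ,q}. -/
open scoped ENNReal

/-- The boundary-layer weight `W_{p,δ}(z) = 1 + Σ_{q=1}^{p} δ^{−q} (1 + (z/δ)^{P−1+q})^{−1}`. -/
noncomputable def wt (P p : ℕ) (δ z : ℝ) : ℝ :=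
  1 + ∑ q ∈ Finset.Icc 1 p, (δ ^ q)⁻¹ * (1 + (z / δ) ^ (P - 1 + q))⁻¹

/-- The boundary-layer norm `‖ω‖_{β,δ,p} = sup_{z≥0} W_{p,δ}(z)^{−1} e^{βz} |ω(z)|`,
valued in `ℝ≥0∞` (it may be infinite). -/
noncomputable def blNorm (P : ℕ) (β δ : ℝ) (p : ℕ) (ω : ℝ → ℂ) : ℝ≥0∞ :=
  ⨆ z : Set.Ici (0:ℝ), ENNReal.ofReal ((wt P p δ z.1)⁻¹ * Real.exp (β * z.1) * ‖ω z.1‖)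

lemma wt_term_nonneg (P a : ℕ) (δ z : ℝ) (hδ : 0 < δ) (hz : 0 ≤ z) :
    0 ≤ (δ ^ a)⁻¹ * (1 + (z / δ) ^ (P - 1 + a))⁻¹ := by positivity

lemma wt_mono (P p r : ℕ) (h : p ≤ r) (δ z : ℝ) (hδ : 0 < δ) (hz : 0 ≤ z) :
    wt P p δ z ≤ wt P r δ z := by
  unfold wt
  gcongr

lemma wt_pos (P p : ℕ) (δ z : ℝ) (hδ : 0 < δ) (hz : 0 ≤ z) : 0 < wt P p δ z := by
  unfold wt
  have := Finset.sum_nonneg (fun i (_ : i ∈ Finset.Icc 1 p) => wt_term_nonneg P i δ z hδ hz)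
  linarith

lemma term_le_wt (P r a : ℕ) (ha : a ∈ Finset.Icc 1 r) (δ z : ℝ) (hδ : 0 < δ) (hz : 0 ≤ z) :
    (δ ^ a)⁻¹ * (1 + (z / δ) ^ (P - 1 + a))⁻¹ ≤ wt P r δ z := by
  unfold wt
  have := Finset.single_le_sum (f := fun a => (δ ^ a)⁻¹ * (1 + (z / δ) ^ (P - 1 + a))⁻¹)
    (fun i (_ : i ∈ Finset.Icc 1 r) => wt_term_nonneg P i δ z hδ hz) ha
  linarith

lemma pow_aux (m a b : ℕ) (x : ℝ) (hx : 0 ≤ x) :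
    1 + x ^ (m + (a + b)) ≤ 2 * ((1 + x ^ (m + a)) * (1 + x ^ (m + b))) := by
  have h1 : x ^ (m + (a + b)) ≤ 1 + x ^ (m + a) * x ^ (m + b) := by
    rw [← pow_add]
    rcases le_total x 1 with h | h
    · have := pow_le_one₀ (n := m + (a + b)) hx h
      have : 0 ≤ x ^ (m + a + (m + b)) := by positivity
      linarith
    · have := pow_le_pow_right₀ h (show m + (a + b) ≤ m + a + (m + b) by omega)
      linarith
  have : 0 ≤ x ^ (m + a) := by positivity
  have : 0 ≤ x ^ (m + b) := by positivity
  have : 0 ≤ x ^ (m + a) * x ^ (m + b) := by positivity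
  nlinarith

lemma term_mul (P a b : ℕ) (δ z : ℝ) (hδ : 0 < δ) (hz : 0 ≤ z) :
    ((δ ^ a)⁻¹ * (1 + (z / δ) ^ (P - 1 + a))⁻¹) * ((δ ^ b)⁻¹ * (1 + (z / δ) ^ (P - 1 + b))⁻¹)
      ≤ 2 * ((δ ^ (a + b))⁻¹ * (1 + (z / δ) ^ (P - 1 + (a + b)))⁻¹) := by
  have hx : 0 ≤ z / δ := by positivity
  have h := pow_aux (P - 1) a b (z / δ) hx
  generalize z / δ = x at *
  have key : (1 + x ^ (P - 1 + a))⁻¹ * (1 + x ^ (P - 1 + b))⁻¹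
      ≤ 2 * (1 + x ^ (P - 1 + (a + b)))⁻¹ := by
    rw [← mul_inv, ← div_eq_mul_inv, inv_eq_one_div, div_le_div_iff₀ (by positivity) (by positivity)]
    linarith
  calc _ = (δ ^ (a + b))⁻¹ * ((1 + x ^ (P - 1 + a))⁻¹ * (1 + x ^ (P - 1 + b))⁻¹) := by
        rw [pow_add δ a b, mul_inv]; ring
    _ ≤ (δ ^ (a + b))⁻¹ * (2 * (1 + x ^ (P - 1 + (a + b)))⁻¹) := by gcongr
    _ = _ := by ring

lemma wt_mul (P p q : ℕ) (δ z : ℝ) (hδ : 0 < δ) (hz : 0 ≤ z) :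
    wt P p δ z * wt P q δ z ≤ (2 + 2 * p * q) * wt P (p + q) δ z := by
  have h1 := wt_mono P p (p + q) (by omega) δ z hδ hz
  have h2 := wt_mono P q (p + q) (by omega) δ z hδ hz
  have h3 : (∑ a ∈ Finset.Icc 1 p, (δ ^ a)⁻¹ * (1 + (z / δ) ^ (P - 1 + a))⁻¹) *
      (∑ b ∈ Finset.Icc 1 q, (δ ^ b)⁻¹ * (1 + (z / δ) ^ (P - 1 + b))⁻¹)
      ≤ 2 * p * q * wt P (p + q) δ z := by
    rw [Finset.sum_mul_sum]
    calc _ ≤ ∑ a ∈ Finset.Icc 1 p, ∑ b ∈ Finset.Icc 1 q, 2 * wt P (p + q) δ z := by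
          refine Finset.sum_le_sum fun a ha => Finset.sum_le_sum fun b hb => ?_
          refine (term_mul P a b δ z hδ hz).trans ?_
          have := term_le_wt P (p + q) (a + b)
            (by simp only [Finset.mem_Icc] at *; omega) δ z hδ hz
          linarith
      _ = _ := by simp; ring
  generalize wt P (p + q) δ z = W at *
  unfold wt at *
  linarith

/-- the algebra property `‖fg‖_{β,δ,p+q} ≤ C ‖f‖_{β,δ,p} ‖g‖_{β,δ,q}`
with a constant `C = C(p,q,P)` independent of `β` and `δ`. -/
theorem blNorm_mul (P : ℕ) (hP : 2 ≤ P) (p q : ℕ) :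
    ∃ C : ℝ, 0 < C ∧ ∀ β δ : ℝ, 0 < β → 0 < δ → ∀ f g : ℝ → ℂ,
      blNorm P β δ (p + q) (fun z => f z * g z) ≤
        ENNReal.ofReal C * blNorm P β δ p f * blNorm P β δ q g := by
  refine ⟨2 + 2 * p * q, by positivity, fun β δ hβ hδ f g => ?_⟩
  unfold blNorm
  refine iSup_le fun z => ?_
  have hz : 0 ≤ z.1 := z.2
  have hp := wt_pos P p δ z.1 hδ hz
  have hq := wt_pos P q δ z.1 hδ hz
  have hr := wt_pos P (p + q) δ z.1 hδ hz
  have hm := wt_mul P p q δ z.1 hδ hz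
  have key : (wt P (p + q) δ z.1)⁻¹ * Real.exp (β * z.1) * ‖f z.1 * g z.1‖ ≤
      (2 + 2 * p * q) * ((wt P p δ z.1)⁻¹ * Real.exp (β * z.1) * ‖f z.1‖) *
        ((wt P q δ z.1)⁻¹ * Real.exp (β * z.1) * ‖g z.1‖) := by
    have he : 1 ≤ Real.exp (β * z.1) := Real.one_le_exp (by positivity)
    have hw : (wt P (p + q) δ z.1)⁻¹ ≤
        (2 + 2 * p * q) * ((wt P p δ z.1)⁻¹ * (wt P q δ z.1)⁻¹) := by
      rw [← mul_inv, ← div_eq_mul_inv, inv_eq_one_div,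
        div_le_div_iff₀ (by positivity) (by positivity)]
      linarith
    rw [norm_mul]
    calc _ ≤ ((2 + 2 * p * q) * ((wt P p δ z.1)⁻¹ * (wt P q δ z.1)⁻¹)) *
          (Real.exp (β * z.1) * Real.exp (β * z.1)) * (‖f z.1‖ * ‖g z.1‖) := by
          gcongr
          exact le_mul_of_one_le_left (by positivity) he
      _ = _ := by ring
  refine (ENNReal.ofReal_le_ofReal key).trans ?_
  rw [ENNReal.ofReal_mul (by positivity), ENNReal.ofReal_mul (by positivity)]
  gcongr
  · exact le_iSup (fun z : Set.Ici (0:ℝ) =>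
      ENNReal.ofReal ((wt P p δ z.1)⁻¹ * Real.exp (β * z.1) * ‖f z.1‖)) z
  · exact le_iSup (fun z : Set.Ici (0:ℝ) =>
      ENNReal.ofReal ((wt P q δ z.1)⁻¹ * Real.exp (β * z.1) * ‖g z.1‖)) z
end

section
/- Let β ∈ (0, 1/2). There exists a constant C = C(β) such that for every real α with |α| ≥ 1 and every continuous f : [0,∞) → ℂ with ‖f‖_β := sup_{z≥0} e^{βz}|f(z)| < ∞, the function φ(z) = −(1/(2|α|)) ∫₀^∞ ( e^{−|α||x−z|} − e^{−|α|(x+z)} ) f(x) dx, which is the decaying solution of φ'' − α²φ = f on (0,∞) with φ(0) = 0, satisfies α² ‖φ‖_β + |α| ‖φ'‖_β + ‖φ''‖_β ≤ C ‖f‖_β. In particular the constant C is independent of α. -/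
open scoped ENNReal

/-- The exponentially weighted sup norm `‖g‖_β = sup_{z≥0} e^{βz}|g(z)|`, valued in `ℝ≥0∞`. -/
noncomputable def expNorm (β : ℝ) (g : ℝ → ℂ) : ℝ≥0∞ :=
  ⨆ z : Set.Ici (0:ℝ), ENNReal.ofReal (Real.exp (β * z.1) * ‖g z.1‖)

/-- The Green's function solution
`φ(z) = −(1/(2α)) ∫₀^∞ ( e^{−α|x−z|} − e^{−α(x+z)} ) f(x) dx` of `φ'' − α²φ = f`, `φ(0)=0`. -/
noncomputable def greenSol (α : ℝ) (f : ℝ → ℂ) (z : ℝ) : ℂ :=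
  -(1 / (2 * (α:ℂ))) * ∫ x in Set.Ici (0:ℝ),
    ((Real.exp (-(α * |x - z|)) - Real.exp (-(α * (x + z))) : ℝ) : ℂ) * f x

open MeasureTheory Set

lemma ee_integrable {β M : ℝ} (hβ0 : 0 < β) {F : ℝ → ℂ} (hF : Continuous F)
    (hM : ∀ x, 0 ≤ x → ‖F x‖ ≤ M * Real.exp (-β * x)) (k : ℝ → ℝ) (hk : Continuous k)
    (hk1 : ∀ x, 0 ≤ x → |k x| ≤ 1) :
    IntegrableOn (fun x => ((k x : ℝ) : ℂ) * F x) (Ioi 0) := by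
  have h1 : IntegrableOn (fun x : ℝ => M * Real.exp (-β * x)) (Ioi 0) :=
    (integrableOn_exp_mul_Ioi (by linarith) 0).const_mul M
  refine Integrable.mono' h1 (Continuous.aestronglyMeasurable (by fun_prop)) ?_
  refine (ae_restrict_iff' measurableSet_Ioi).2 (Filter.Eventually.of_forall fun x hx => ?_)
  have hx0 : 0 ≤ x := le_of_lt hx
  rw [norm_mul, Complex.norm_real, Real.norm_eq_abs]
  calc |k x| * ‖F x‖ ≤ 1 * ‖F x‖ := by gcongr; exact hk1 x hx0
    _ ≤ _ := by rw [one_mul]; exact hM x hx0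

lemma ee_tail {a β M : ℝ} (ha : 0 < a + β) {F : ℝ → ℂ} 
    (hM : ∀ x, 0 ≤ x → ‖F x‖ ≤ M * Real.exp (-β * x)) (z : ℝ) (hz : 0 ≤ z) :
    ‖∫ x in Ioi z, ((Real.exp (-a * x) : ℝ) : ℂ) * F x‖
      ≤ M * (Real.exp (-(a + β) * z) / (a + β)) := by
  have h1 : IntegrableOn (fun x : ℝ => M * Real.exp (-(a + β) * x)) (Ioi z) :=
    (integrableOn_exp_mul_Ioi (by linarith) z).const_mul M
  have h2 : ∫ x in Ioi z, M * Real.exp (-(a + β) * x) = M * (Real.exp (-(a + β) * z) / (a + β)) := by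
    rw [integral_const_mul, integral_exp_mul_Ioi (by linarith), neg_div_neg_eq]
  rw [← h2]
  refine norm_integral_le_of_norm_le h1 ?_
  refine (ae_restrict_iff' measurableSet_Ioi).2 (Filter.Eventually.of_forall fun x hx => ?_)
  have hx0 : 0 ≤ x := hz.trans (le_of_lt hx)
  rw [norm_mul, Complex.norm_real, Real.norm_eq_abs, abs_of_pos (Real.exp_pos _)]
  have : -(a + β) * x = -a * x + -β * x := by ring
  rw [this, Real.exp_add]
  nlinarith [hM x hx0, Real.exp_pos (-a * x)]

lemma ee_head {a β M : ℝ} (ha : 0 < a - β) (hM0 : 0 ≤ M) {F : ℝ → ℂ} 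
    (hM : ∀ x, 0 ≤ x → ‖F x‖ ≤ M * Real.exp (-β * x)) (z : ℝ) (hz : 0 ≤ z) :
    ‖∫ x in (0:ℝ)..z, ((Real.exp (a * x) : ℝ) : ℂ) * F x‖
      ≤ M * (Real.exp ((a - β) * z) / (a - β)) := by
  have h2 : ∫ x in (0:ℝ)..z, M * Real.exp ((a - β) * x)
      = M * (Real.exp ((a - β) * z) / (a - β)) - M * (Real.exp ((a - β) * 0) / (a - β)) := by
    refine intervalIntegral.integral_eq_sub_of_hasDerivAt
      (f := fun x => M * (Real.exp ((a - β) * x) / (a - β))) (fun x _ => ?_)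
      (Continuous.intervalIntegrable (by fun_prop) _ _)
    have h : HasDerivAt (fun x => Real.exp ((a - β) * x)) _ x :=
      ((hasDerivAt_id x).const_mul (a - β)).exp
    refine ((h.div_const (a - β)).const_mul M).congr_deriv ?_
    field_simp
    rfl
  have h3 : ‖∫ x in (0:ℝ)..z, ((Real.exp (a * x) : ℝ) : ℂ) * F x‖
      ≤ ∫ x in (0:ℝ)..z, M * Real.exp ((a - β) * x) := by
    refine intervalIntegral.norm_integral_le_of_norm_le hz
      (Filter.Eventually.of_forall fun x hx => ?_)
      (Continuous.intervalIntegrable (by fun_prop) _ _)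
    have hx0 : 0 ≤ x := le_of_lt hx.1
    rw [norm_mul, Complex.norm_real, Real.norm_eq_abs, abs_of_pos (Real.exp_pos _)]
    have : (a - β) * x = a * x + -β * x := by ring
    rw [this, Real.exp_add]
    nlinarith [hM x hx0, Real.exp_pos (a * x)]
  have h4 : 0 ≤ M * (Real.exp ((a - β) * 0) / (a - β)) := by positivity
  linarith

lemma ee_deriv_exp (a z : ℝ) :
    HasDerivAt (fun x : ℝ => ((Real.exp (a * x) : ℝ) : ℂ)) (a * ((Real.exp (a * z) : ℝ) : ℂ)) z := by
  have h : HasDerivAt (fun x => Real.exp (a * x)) _ z := ((hasDerivAt_id z).const_mul a).exp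
  refine HasDerivAt.congr_deriv (h.ofReal_comp) ?_
  simp [mul_comm]

lemma ee_expNorm_le {β B : ℝ} {g : ℝ → ℂ} 
    (h : ∀ z, 0 ≤ z → ‖g z‖ ≤ B * Real.exp (-β * z)) : expNorm β g ≤ ENNReal.ofReal B := by
  refine iSup_le fun z => ENNReal.ofReal_le_ofReal ?_
  have h1 := h z.1 z.2
  calc _ ≤ Real.exp (β * z.1) * (B * Real.exp (-β * z.1)) := by gcongr
    _ = B * Real.exp (β * z.1 + -β * z.1) := by rw [Real.exp_add]; ring
    _ = B := by simp

lemma ee_core {a β M : ℝ} (ha1 : 1 ≤ a) (hβ0 : 0 < β) (hβ : β < 1/2) (hM0 : 0 ≤ M) {F : ℝ → ℂ}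
    (hF : Continuous F) (hM : ∀ x, 0 ≤ x → ‖F x‖ ≤ M * Real.exp (-β * x)) :
    ∃ Φ Φ' : ℝ → ℂ, (∀ z, 0 ≤ z → greenSol a F z = Φ z) ∧ (∀ z, HasDerivAt Φ (Φ' z) z) ∧
      (∀ z, HasDerivAt Φ' (a ^ 2 * Φ z + F z) z) ∧
      (∀ z, 0 ≤ z → ‖Φ z‖ ≤ 3 * M / a ^ 2 * Real.exp (-β * z)) ∧
      (∀ z, 0 ≤ z → ‖Φ' z‖ ≤ 3 * M / a * Real.exp (-β * z)) := by
  have ha0 : 0 < a := by linarith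
  have haC : (a : ℂ) ≠ 0 := by exact_mod_cast ha0.ne'
  set K : ℂ := ∫ x in Ioi (0:ℝ), ((Real.exp (-a * x) : ℝ) : ℂ) * F x with hK
  set P : ℝ → ℂ := fun z => ∫ x in (0:ℝ)..z, ((Real.exp (a * x) : ℝ) : ℂ) * F x with hP
  set R : ℝ → ℂ := fun z => ∫ x in (0:ℝ)..z, ((Real.exp (-a * x) : ℝ) : ℂ) * F x with hR
  have hint : IntegrableOn (fun x => ((Real.exp (-a * x) : ℝ) : ℂ) * F x) (Ioi 0) := by
    refine ee_integrable hβ0 hF hM (fun x => Real.exp (-a * x)) (by fun_prop) fun x hx => ?_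
    rw [abs_of_pos (Real.exp_pos _), Real.exp_le_one_iff]
    nlinarith
  have hQ : ∀ z, 0 ≤ z → K - R z = ∫ x in Ioi z, ((Real.exp (-a * x) : ℝ) : ℂ) * F x := by
    intro z hz
    rw [hK, ← intervalIntegral.integral_interval_add_Ioi hint
      (hint.mono_set (Ioi_subset_Ioi hz))]
    simp [hR]
  have hdP : ∀ z, HasDerivAt P (((Real.exp (a * z) : ℝ) : ℂ) * F z) z := fun z =>
    (Continuous.integral_hasStrictDerivAt (by fun_prop) 0 z).hasDerivAt
  have hdR : ∀ z, HasDerivAt R (((Real.exp (-a * z) : ℝ) : ℂ) * F z) z := fun z =>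
    (Continuous.integral_hasStrictDerivAt (by fun_prop) 0 z).hasDerivAt
  have hee : ∀ z : ℝ, ((Real.exp (-a * z) : ℝ) : ℂ) * ((Real.exp (a * z) : ℝ) : ℂ) = 1 := by
    intro z
    rw [← Complex.ofReal_mul, ← Real.exp_add]; simp
  have hd1 : ∀ z, HasDerivAt (fun z => ((Real.exp (-a * z) : ℝ) : ℂ) * (P z - K))
      (-a * (((Real.exp (-a * z) : ℝ) : ℂ) * (P z - K)) + F z) z := by
    intro z
    refine HasDerivAt.congr_deriv ((ee_deriv_exp (-a) z).mul ((hdP z).sub_const K)) ?_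
    rw [← mul_assoc _ _ (F z), hee]; push_cast; ring
  have hd2 : ∀ z, HasDerivAt (fun z => ((Real.exp (a * z) : ℝ) : ℂ) * (K - R z))
      (a * (((Real.exp (a * z) : ℝ) : ℂ) * (K - R z)) - F z) z := by
    intro z
    refine HasDerivAt.congr_deriv ((ee_deriv_exp a z).mul ((hdR z).const_sub K)) ?_
    rw [mul_neg, ← mul_assoc _ _ (F z), mul_comm (((Real.exp (a * z) : ℝ) : ℂ)) 
      ((Real.exp (-a * z) : ℝ) : ℂ), hee]; ring
  -- bounds
  have hb1 : ∀ z, 0 ≤ z → ‖((Real.exp (-a * z) : ℝ) : ℂ) * (P z - K)‖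
      ≤ 4 * M / a * Real.exp (-β * z) := by
    intro z hz
    have e1 := ee_head (a := a) (by linarith) hM0 hM z hz
    have e2 := ee_tail (a := a) (by linarith) hM 0 le_rfl
    rw [mul_zero, Real.exp_zero] at e2
    have e3 : ‖P z - K‖ ≤ M * (Real.exp ((a - β) * z) / (a - β)) + M * (1 / (a + β)) :=
      (norm_sub_le _ _).trans (add_le_add e1 e2)
    rw [norm_mul, Complex.norm_real, Real.norm_eq_abs, abs_of_pos (Real.exp_pos _)]
    have e4 : Real.exp ((a - β) * z) / (a - β) ≤ Real.exp ((a - β) * z) * (2 / a) := by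
      rw [div_eq_mul_inv]
      gcongr
      rw [inv_eq_one_div, div_le_div_iff₀ (by linarith) ha0]
      linarith
    have e5 : 1 / (a + β) ≤ Real.exp ((a - β) * z) * (2 / a) := by
      have : 1 / (a + β) ≤ 2 / a := by
        rw [div_le_div_iff₀ (by linarith) ha0]
        linarith
      have h1 : 1 ≤ Real.exp ((a - β) * z) := Real.one_le_exp (mul_nonneg (by linarith) hz)
      have h2 : 0 < 2 / a := by positivity
      nlinarith
    have e6 : ‖P z - K‖ ≤ M * (Real.exp ((a - β) * z) * (2 / a)) 
        + M * (Real.exp ((a - β) * z) * (2 / a)) := by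
      refine e3.trans ?_
      gcongr
    have e7 : Real.exp (-β * z) = Real.exp (-a * z) * Real.exp ((a - β) * z) := by
      rw [← Real.exp_add]; congr 1; ring
    calc _ ≤ Real.exp (-a * z) * (M * (Real.exp ((a - β) * z) * (2 / a)) 
        + M * (Real.exp ((a - β) * z) * (2 / a))) := by gcongr
      _ = _ := by rw [e7]; ring
  have hb2 : ∀ z, 0 ≤ z → ‖((Real.exp (a * z) : ℝ) : ℂ) * (K - R z)‖
      ≤ 2 * M / a * Real.exp (-β * z) := by
    intro z hz
    have e2 := ee_tail (a := a) (by linarith) hM z hz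
    rw [← hQ z hz] at e2
    rw [norm_mul, Complex.norm_real, Real.norm_eq_abs, abs_of_pos (Real.exp_pos _)]
    have e4 : Real.exp (-(a + β) * z) / (a + β) ≤ Real.exp (-(a + β) * z) * (2 / a) := by
      rw [div_eq_mul_inv]
      gcongr
      rw [inv_eq_one_div, div_le_div_iff₀ (by linarith) ha0]
      linarith
    have e7 : Real.exp (-β * z) = Real.exp (a * z) * Real.exp (-(a + β) * z) := by
      rw [← Real.exp_add]; congr 1; ring
    calc _ ≤ Real.exp (a * z) * (M * (Real.exp (-(a + β) * z) * (2 / a))) := by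
          gcongr
          exact e2.trans (by gcongr)
      _ = _ := by rw [e7]; ring
  refine ⟨fun z => -(1 / (2 * (a:ℂ))) * (((Real.exp (-a * z) : ℝ) : ℂ) * (P z - K)
      + ((Real.exp (a * z) : ℝ) : ℂ) * (K - R z)),
    fun z => -(1 / 2) * (-(((Real.exp (-a * z) : ℝ) : ℂ) * (P z - K))
      + ((Real.exp (a * z) : ℝ) : ℂ) * (K - R z)), ?_, ?_, ?_, ?_, ?_⟩
  · intro z hz
    simp only [greenSol]
    congr 1
    rw [integral_Ici_eq_integral_Ioi]
    have i1 : IntegrableOn (fun x => ((Real.exp (-(a * |x - z|)) : ℝ) : ℂ) * F x) (Ioi 0) := by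
      refine ee_integrable hβ0 hF hM (fun x => Real.exp (-(a * |x - z|))) (by fun_prop)
        fun x hx => ?_
      rw [abs_of_pos (Real.exp_pos _), Real.exp_le_one_iff]
      have := abs_nonneg (x - z)
      nlinarith
    have i2 : IntegrableOn (fun x => ((Real.exp (-a * z) : ℝ) : ℂ) *
        (((Real.exp (-a * x) : ℝ) : ℂ) * F x)) (Ioi 0) := hint.const_mul _
    have s1 : ∫ x in Ioi (0:ℝ), ((Real.exp (-(a * |x - z|)) - Real.exp (-(a * (x + z))) : ℝ) : ℂ) * F x
        = (∫ x in Ioi (0:ℝ), ((Real.exp (-(a * |x - z|)) : ℝ) : ℂ) * F x)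
          - ∫ x in Ioi (0:ℝ), ((Real.exp (-a * z) : ℝ) : ℂ) *
        (((Real.exp (-a * x) : ℝ) : ℂ) * F x) := by
      rw [← integral_sub i1 i2]
      congr 1
      ext x
      have : -(a * (x + z)) = -a * z + -a * x := by ring
      rw [this, Real.exp_add]; push_cast; ring
    rw [s1, integral_const_mul, ← hK, ← intervalIntegral.integral_interval_add_Ioi i1
      (i1.mono_set (Ioi_subset_Ioi hz)), hQ z hz]
    have s2 : ∫ x in (0:ℝ)..z, ((Real.exp (-(a * |x - z|)) : ℝ) : ℂ) * F x
        = ((Real.exp (-a * z) : ℝ) : ℂ) * P z := by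
      rw [hP, ← intervalIntegral.integral_const_mul]
      refine intervalIntegral.integral_congr fun x hx => ?_
      rw [uIcc_of_le hz] at hx
      have : -(a * |x - z|) = -a * z + a * x := by
        rw [abs_of_nonpos (by linarith [hx.2])]; ring
      simp only [this, Real.exp_add]; push_cast; ring
    have s3 : ∫ x in Ioi z, ((Real.exp (-(a * |x - z|)) : ℝ) : ℂ) * F x
        = ((Real.exp (a * z) : ℝ) : ℂ) * ∫ x in Ioi z, ((Real.exp (-a * x) : ℝ) : ℂ) * F x := by
      rw [← integral_const_mul]
      refine setIntegral_congr_fun measurableSet_Ioi fun x hx => ?_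
      have : -(a * |x - z|) = a * z + -a * x := by
        rw [abs_of_nonneg (by linarith [mem_Ioi.1 hx])]; ring
      simp only [this, Real.exp_add]; push_cast; ring
    rw [s2, s3]; ring
  · intro z
    refine HasDerivAt.congr_deriv (((hd1 z).add (hd2 z)).const_mul (-(1 / (2 * (a:ℂ))))) ?_
    field_simp
    ring
  · intro z
    refine HasDerivAt.congr_deriv (((hd1 z).neg.add (hd2 z)).const_mul (-(1 / 2) : ℂ)) ?_
    field_simp
    ring
  · intro z hz
    have h := (norm_add_le _ _).trans (add_le_add (hb1 z hz) (hb2 z hz))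
    have hn : ‖-(1 / (2 * (a:ℂ)))‖ = 1 / (2 * a) := by
      simp [abs_of_pos ha0]
    rw [norm_mul, hn]
    calc _ ≤ 1 / (2 * a) * (4 * M / a * Real.exp (-β * z) + 2 * M / a * Real.exp (-β * z)) := by gcongr
      _ = _ := by field_simp; ring
  · intro z hz
    have h := (norm_add_le (-(((Real.exp (-a * z) : ℝ) : ℂ) * (P z - K))) _).trans
      (add_le_add ((norm_neg _).trans_le (hb1 z hz)) (hb2 z hz))
    have hn : ‖(-(1 / 2) : ℂ)‖ = 1 / 2 := by simp
    rw [norm_mul, hn]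
    calc _ ≤ 1 / 2 * (4 * M / a * Real.exp (-β * z) + 2 * M / a * Real.exp (-β * z)) := by gcongr
      _ = _ := by field_simp; ring



/-- the weighted elliptic estimate
`α²‖φ‖_β + |α|‖φ'‖_β + ‖φ''‖_β ≤ C‖f‖_β`, with `C = C(β)` independent of `α`, `|α| ≥ 1`. -/
theorem elliptic_estimate_exp (β : ℝ) (hβ0 : 0 < β) (hβ : β < 1/2) :
    ∃ C : ℝ, 0 < C ∧ ∀ α : ℝ, 1 ≤ |α| → ∀ f : ℝ → ℂ,
      ContinuousOn f (Set.Ici 0) → expNorm β f < ⊤ →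
      ENNReal.ofReal (α ^ 2) * expNorm β (greenSol |α| f)
        + ENNReal.ofReal |α| * expNorm β (derivWithin (greenSol |α| f) (Set.Ici 0))
        + expNorm β
            (derivWithin (derivWithin (greenSol |α| f) (Set.Ici 0)) (Set.Ici 0))
        ≤ ENNReal.ofReal C * expNorm β f := by
  refine ⟨10, by norm_num, fun α hα f hf hfin => ?_⟩
  have ha0 : 0 < |α| := by linarith
  set a := |α| with ha
  set M := (expNorm β f).toReal with hMdef
  have hM0 : 0 ≤ M := ENNReal.toReal_nonneg
  have hMe : expNorm β f = ENNReal.ofReal M := (ENNReal.ofReal_toReal hfin.ne).symm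
  set F : ℝ → ℂ := fun x => f (max x 0) with hFdef
  have hFf : ∀ x, 0 ≤ x → F x = f x := fun x hx => by simp [hFdef, hx]
  have hF : Continuous F :=
    hf.comp_continuous (by fun_prop) fun x => Set.mem_Ici.2 (le_max_right x 0)
  have hM : ∀ x, 0 ≤ x → ‖F x‖ ≤ M * Real.exp (-β * x) := by
    intro x hx
    rw [hFf x hx]
    have h1 : ENNReal.ofReal (Real.exp (β * x) * ‖f x‖) ≤ ENNReal.ofReal M := by
      rw [← hMe]
      exact le_iSup (fun z : Set.Ici (0:ℝ) => ENNReal.ofReal (Real.exp (β * z.1) * ‖f z.1‖)) ⟨x, hx⟩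
    have h2 := (ENNReal.ofReal_le_ofReal_iff hM0).1 h1
    rw [neg_mul, Real.exp_neg, ← div_eq_mul_inv, le_div_iff₀ (Real.exp_pos _)]
    linarith
  obtain ⟨Φ, Φ', h0, h1, h2, b0, b1⟩ := ee_core hα hβ0 hβ hM0 hF hM
  have g0 : ∀ z ∈ Ici (0:ℝ), greenSol a f z = Φ z := by
    intro z hz
    rw [← h0 z hz]
    simp only [greenSol]
    congr 1
    refine setIntegral_congr_fun measurableSet_Ici fun x hx => ?_
    simp only [hFf x hx]
  have g1 : ∀ z ∈ Ici (0:ℝ), derivWithin (greenSol a f) (Ici 0) z = Φ' z := by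
    intro z hz
    rw [derivWithin_congr g0 (g0 z hz)]
    exact (h1 z).hasDerivWithinAt.derivWithin (uniqueDiffOn_Ici 0 z hz)
  have g2 : ∀ z ∈ Ici (0:ℝ), derivWithin (derivWithin (greenSol a f) (Ici 0)) (Ici 0) z
      = a ^ 2 * Φ z + F z := by
    intro z hz
    rw [derivWithin_congr g1 (g1 z hz)]
    exact (h2 z).hasDerivWithinAt.derivWithin (uniqueDiffOn_Ici 0 z hz)
  have n0 : expNorm β (greenSol a f) ≤ ENNReal.ofReal (3 * M / a ^ 2) :=
    ee_expNorm_le fun z hz => (congrArg norm (g0 z hz)).trans_le (b0 z hz)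
  have n1 : expNorm β (derivWithin (greenSol a f) (Ici 0)) ≤ ENNReal.ofReal (3 * M / a) :=
    ee_expNorm_le fun z hz => (congrArg norm (g1 z hz)).trans_le (b1 z hz)
  have n2 : expNorm β (derivWithin (derivWithin (greenSol a f) (Ici 0)) (Ici 0))
      ≤ ENNReal.ofReal (4 * M) := by
    refine ee_expNorm_le fun z hz => ?_
    rw [g2 z hz]
    have hn : ‖(a:ℂ) ^ 2‖ = a ^ 2 := by simp [abs_of_pos ha0]
    calc _ ≤ ‖(a:ℂ) ^ 2 * Φ z‖ + ‖F z‖ := norm_add_le _ _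
      _ ≤ a ^ 2 * (3 * M / a ^ 2 * Real.exp (-β * z)) + M * Real.exp (-β * z) := by
          rw [norm_mul, hn]
          gcongr
          · exact b0 z hz
          · exact hM z hz
      _ = _ := by field_simp; ring
  have hsq : α ^ 2 = a ^ 2 := (sq_abs α).symm
  rw [hMe, hsq]
  calc _ ≤ ENNReal.ofReal (a ^ 2) * ENNReal.ofReal (3 * M / a ^ 2)
        + ENNReal.ofReal a * ENNReal.ofReal (3 * M / a) + ENNReal.ofReal (4 * M) := by gcongr
    _ = ENNReal.ofReal 10 * ENNReal.ofReal M := by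
      rw [← ENNReal.ofReal_mul (by positivity), ← ENNReal.ofReal_mul (by positivity),
        ← ENNReal.ofReal_mul (by positivity), ← ENNReal.ofReal_add (by positivity) (by positivity),
        ← ENNReal.ofReal_add (by positivity) (by positivity)]
      congr 1
      field_simp
      ring
end

section
/- Fix an integer P ≥ 2 and let β ∈ (0, 1/2). There exists a constant C = C(β,P) such that for every real α with |α| ≥ 1, every δ ∈ (0,1], and every continuous f : [0,∞) → ℂ with ‖f‖_{β,δ,1} < ∞, the function φ(z) = −(1/(2|α|)) ∫₀^∞ ( e^{−|α||x−z|} − e^{−|α|(x+z)} ) f(x) dx, which is the decaying solution of φ'' − α²φ = f on (0,∞) with φ(0) = 0, satisfies |α| ‖φ‖_β + ‖φ'‖_β ≤ C ‖f‖_{β,δ,1}. In particular the constant C is independent of α and δ. -/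
open scoped ENNReal

open MeasureTheory Set Filter Topology in
lemma aux_derivWithin_le (g : ℝ → ℂ) (z C : ℝ) (hz : 0 ≤ z) (hC : 0 ≤ C)
    (h : ∀ᶠ w in 𝓝[Ici 0] z, ‖g w - g z‖ ≤ C * |w - z|) :
    ‖derivWithin g (Ici 0) z‖ ≤ C := by
  by_cases hd : DifferentiableWithinAt ℝ g (Ici 0) z
  · have h1 := hasDerivWithinAt_iff_tendsto_slope.1 hd.hasDerivWithinAt
    have hne : (𝓝[Ici 0 \ {z}] z).NeBot :=
      accPt_principal_iff_nhdsWithin.1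
        (uniqueDiffWithinAt_iff_accPt.1 (uniqueDiffOn_Ici (0:ℝ) z hz))
    refine le_of_tendsto h1.norm ?_
    have h2 : ∀ᶠ w in 𝓝[Ici 0 \ {z}] z, ‖g w - g z‖ ≤ C * |w - z| :=
      h.filter_mono (nhdsWithin_mono _ sdiff_subset)
    filter_upwards [h2, self_mem_nhdsWithin] with w hw hw'
    have hpos : 0 < |w - z| := abs_pos.2 (sub_ne_zero.2 hw'.2)
    rw [slope_def_module, norm_smul, norm_inv, Real.norm_eq_abs, inv_mul_le_iff₀ hpos]
    linarith
  · rw [derivWithin_zero_of_not_differentiableWithinAt hd]; simpa using hC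

lemma aux_exp_le (y : ℝ) : Real.exp (-(|y| / 2)) ≤ 8 * (1 + y ^ 2)⁻¹ := by
  have h := Real.quadratic_le_exp_of_nonneg (x := |y| / 2) (by positivity)
  rw [Real.exp_neg, ← div_eq_mul_inv, inv_eq_one_div, div_le_div_iff₀ (Real.exp_pos _) (by positivity)]
  have := sq_abs y
  have := abs_nonneg y
  nlinarith

lemma aux_inv_le (P : ℕ) (hP : 2 ≤ P) (y : ℝ) (hy : 0 ≤ y) :
    (1 + y ^ P)⁻¹ ≤ 2 * (1 + y ^ 2)⁻¹ := by
  have hp : 0 ≤ y ^ P := by positivity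
  rw [← div_eq_mul_inv, inv_eq_one_div, div_le_div_iff₀ (by positivity) (by positivity)]
  rcases le_total y 1 with h | h
  · nlinarith
  · have := pow_le_pow_right₀ h hP
    nlinarith

/-- dominating function -/
noncomputable def auxH (δ z x : ℝ) : ℝ :=
  8 * (1 + (x - z) ^ 2)⁻¹ + 2 * (δ⁻¹ * (1 + (x / δ) ^ 2)⁻¹)

lemma auxH_nonneg {δ : ℝ} (hδ : 0 < δ) (z x : ℝ) : 0 ≤ auxH δ z x := by
  unfold auxH; positivity

open MeasureTheory in
lemma auxH_integrable {δ : ℝ} (hδ : 0 < δ) (z : ℝ) : Integrable (auxH δ z) := by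
  unfold auxH
  exact ((integrable_inv_one_add_sq.comp_sub_right z).const_mul 8).add
    (((integrable_inv_one_add_sq.comp_div hδ.ne').const_mul δ⁻¹).const_mul 2)

open MeasureTheory in
lemma auxH_integral {δ : ℝ} (hδ : 0 < δ) (z : ℝ) : ∫ x, auxH δ z x = 10 * Real.pi := by
  unfold auxH
  rw [integral_add ((integrable_inv_one_add_sq.comp_sub_right z).const_mul 8)
    (((integrable_inv_one_add_sq.comp_div hδ.ne').const_mul δ⁻¹).const_mul 2)]
  rw [integral_const_mul, integral_const_mul, integral_const_mul,
    integral_sub_right_eq_self (fun x : ℝ => (1 + x ^ 2)⁻¹) z,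
    Measure.integral_comp_div (fun x : ℝ => (1 + x ^ 2)⁻¹) δ, integral_univ_inv_one_add_sq,
    smul_eq_mul, abs_of_pos hδ]
  field_simp
  norm_num

lemma aux_wt_le (P : ℕ) (hP : 2 ≤ P) {δ x : ℝ} (hδ : 0 < δ) (hx : 0 ≤ x) :
    wt P 1 δ x ≤ 1 + 2 * (δ⁻¹ * (1 + (x / δ) ^ 2)⁻¹) := by
  have h := aux_inv_le P hP (x / δ) (by positivity)
  have e : P - 1 + 1 = P := by omega
  simp only [wt, Finset.Icc_self, Finset.sum_singleton, pow_one, e]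
  have := mul_le_mul_of_nonneg_left h (inv_nonneg.2 hδ.le)
  linarith

lemma aux_wt_pos (P : ℕ) {δ x : ℝ} (hδ : 0 < δ) (hx : 0 ≤ x) : 0 < wt P 1 δ x := by
  simp only [wt, Finset.Icc_self, Finset.sum_singleton]
  positivity

lemma aux_dom (P : ℕ) (hP : 2 ≤ P) {β a δ M x z : ℝ} (hβ0 : 0 < β) (hβ : β < 1 / 2) (ha : 1 ≤ a)
    (hδ : 0 < δ) (hM : 0 ≤ M) (hx : 0 ≤ x) (f : ℝ → ℂ)
    (hf : (wt P 1 δ x)⁻¹ * Real.exp (β * x) * ‖f x‖ ≤ M) :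
    Real.exp (-(a * |x - z|)) * ‖f x‖ ≤ M * Real.exp (-(β * z)) * auxH δ z x := by
  have hw := aux_wt_pos P hδ hx
  have hw2 := aux_wt_le P hP hδ hx
  have h1 : ‖f x‖ ≤ M * wt P 1 δ x * Real.exp (-(β * x)) := by
    rw [Real.exp_neg, ← div_eq_mul_inv, le_div_iff₀ (Real.exp_pos _)]
    rw [mul_assoc, inv_mul_le_iff₀ hw] at hf
    linarith
  have h2 : Real.exp (-(a * |x - z|)) * Real.exp (-(β * x))
      ≤ Real.exp (-(β * z)) * Real.exp (-(|x - z| / 2)) := by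
    rw [← Real.exp_add, ← Real.exp_add, Real.exp_le_exp]
    have := neg_abs_le (x - z)
    have := abs_nonneg (x - z)
    nlinarith
  have h3 : Real.exp (-(|x - z| / 2)) * wt P 1 δ x ≤ auxH δ z x := by
    have e1 := aux_exp_le (x - z)
    have e2 : Real.exp (-(|x - z| / 2)) ≤ 1 := Real.exp_le_one_iff.2 (by
      have := abs_nonneg (x - z); linarith)
    have e3 : 0 ≤ 2 * (δ⁻¹ * (1 + (x / δ) ^ 2)⁻¹) := by positivity
    unfold auxH
    have := mul_le_mul_of_nonneg_left hw2 (Real.exp_pos (-(|x - z| / 2))).le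
    nlinarith
  calc _ ≤ Real.exp (-(a * |x - z|)) * (M * wt P 1 δ x * Real.exp (-(β * x))) := by gcongr
    _ = M * wt P 1 δ x * (Real.exp (-(a * |x - z|)) * Real.exp (-(β * x))) := by ring
    _ ≤ M * wt P 1 δ x * (Real.exp (-(β * z)) * Real.exp (-(|x - z| / 2))) := by gcongr
    _ = M * Real.exp (-(β * z)) * (Real.exp (-(|x - z| / 2)) * wt P 1 δ x) := by ring
    _ ≤ _ := by gcongr

lemma aux_exp_diff {s t : ℝ} (h : |s - t| ≤ 1) :
    |Real.exp (-s) - Real.exp (-t)| ≤ 2 * |s - t| * Real.exp (-t) := by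
  have h1 : Real.exp (-s) - Real.exp (-t) = (Real.exp (t - s) - 1) * Real.exp (-t) := by
    rw [sub_mul, ← Real.exp_add]; ring_nf
  rw [h1, abs_mul, abs_of_pos (Real.exp_pos (-t)), abs_sub_comm s t]
  exact mul_le_mul_of_nonneg_right (Real.abs_exp_sub_one_le (by rwa [abs_sub_comm])) (Real.exp_pos _).le

/-- the kernel -/
noncomputable def auxK (a z x : ℝ) : ℝ :=
  Real.exp (-(a * |x - z|)) - Real.exp (-(a * (x + z)))

lemma aux_exp_mono {a x z : ℝ} (ha : 1 ≤ a) (hx : 0 ≤ x) (hz : 0 ≤ z) :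
    Real.exp (-(a * (x + z))) ≤ Real.exp (-(a * |x - z|)) := by
  have : |x - z| ≤ x + z := abs_le.2 ⟨by linarith, by linarith⟩
  rw [Real.exp_le_exp]
  nlinarith

lemma auxK_le {a x z : ℝ} (ha : 1 ≤ a) (hx : 0 ≤ x) (hz : 0 ≤ z) :
    |auxK a z x| ≤ Real.exp (-(a * |x - z|)) := by
  have := aux_exp_mono ha hx hz
  have := Real.exp_pos (-(a * (x + z)))
  unfold auxK
  rw [abs_of_nonneg] <;> linarith

lemma auxK_diff {a x z w : ℝ} (ha : 1 ≤ a) (hx : 0 ≤ x) (hz : 0 ≤ z) (hwz : a * |w - z| ≤ 1) :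
    |auxK a w x - auxK a z x| ≤ 4 * a * |w - z| * Real.exp (-(a * |x - z|)) := by
  have ha0 : 0 ≤ a := by linarith
  have e1 : |(a * |x - w|) - (a * |x - z|)| ≤ a * |w - z| := by
    rw [← mul_sub, abs_mul, abs_of_nonneg ha0]
    refine mul_le_mul_of_nonneg_left ?_ ha0
    have := abs_abs_sub_abs_le (x - w) (x - z)
    rwa [show x - w - (x - z) = -(w - z) by ring, abs_neg] at this
  have e2 : |a * (x + w) - a * (x + z)| = a * |w - z| := by
    rw [← mul_sub, abs_mul, abs_of_nonneg ha0]; congr 2; ring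
  have h1 := aux_exp_diff (e1.trans hwz)
  have h2 := aux_exp_diff (e2.le.trans hwz)
  rw [e2] at h2
  have h3 := aux_exp_mono ha hx hz
  have hnn : 0 ≤ a * |w - z| := by positivity
  have h1' : |Real.exp (-(a * |x - w|)) - Real.exp (-(a * |x - z|))|
      ≤ 2 * (a * |w - z|) * Real.exp (-(a * |x - z|)) := h1.trans (by gcongr)
  have h2' : |Real.exp (-(a * (x + w))) - Real.exp (-(a * (x + z)))|
      ≤ 2 * (a * |w - z|) * Real.exp (-(a * |x - z|)) := h2.trans (by gcongr)
  have : auxK a w x - auxK a z x = (Real.exp (-(a * |x - w|)) - Real.exp (-(a * |x - z|)))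
    - (Real.exp (-(a * (x + w))) - Real.exp (-(a * (x + z)))) := by unfold auxK; ring
  rw [this]
  refine (abs_sub _ _).trans ?_
  linarith

open MeasureTheory Set in
/-- integral bound for any kernel dominated by a multiple of `exp (-a|x-z|)` -/
lemma aux_int (P : ℕ) (hP : 2 ≤ P) {β a δ M z c : ℝ} (hβ0 : 0 < β) (hβ : β < 1 / 2) (ha : 1 ≤ a)
    (hδ : 0 < δ) (hM : 0 ≤ M) (hc : 0 ≤ c) (f : ℝ → ℂ) (hfc : ContinuousOn f (Ici 0))
    (hf : ∀ x, 0 ≤ x → (wt P 1 δ x)⁻¹ * Real.exp (β * x) * ‖f x‖ ≤ M)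
    (k : ℝ → ℝ) (hk : Continuous k)
    (hkb : ∀ x, 0 ≤ x → |k x| ≤ c * Real.exp (-(a * |x - z|))) :
    IntegrableOn (fun x => (k x : ℂ) * f x) (Ici 0) ∧
    ‖∫ x in Ici (0:ℝ), (k x : ℂ) * f x‖ ≤ c * (M * Real.exp (-(β * z)) * (10 * Real.pi)) := by
  have hb : ∀ᵐ x ∂(volume.restrict (Ici (0:ℝ))),
      ‖(k x : ℂ) * f x‖ ≤ c * (M * Real.exp (-(β * z)) * auxH δ z x) := by
    filter_upwards [ae_restrict_mem measurableSet_Ici] with x hx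
    rw [norm_mul, Complex.norm_real, Real.norm_eq_abs]
    calc _ ≤ c * Real.exp (-(a * |x - z|)) * ‖f x‖ := by gcongr; exact hkb x hx
      _ = c * (Real.exp (-(a * |x - z|)) * ‖f x‖) := by ring
      _ ≤ _ := mul_le_mul_of_nonneg_left (aux_dom P hP hβ0 hβ ha hδ hM hx f (hf x hx)) hc
  have hi : Integrable (fun x => c * (M * Real.exp (-(β * z)) * auxH δ z x)) :=
    ((auxH_integrable hδ z).const_mul _).const_mul _
  have hm : AEStronglyMeasurable (fun x => (k x : ℂ) * f x) (volume.restrict (Ici (0:ℝ))) :=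
    ((Complex.continuous_ofReal.comp hk).continuousOn.mul hfc).aestronglyMeasurable
      measurableSet_Ici
  refine ⟨Integrable.mono' hi.integrableOn hm hb, ?_⟩
  refine (norm_integral_le_of_norm_le hi.integrableOn hb).trans ?_
  refine (setIntegral_le_integral hi (Filter.Eventually.of_forall fun x => ?_)).trans ?_
  · have := auxH_nonneg hδ z x
    simp only [Pi.zero_apply]
    positivity
  · rw [integral_const_mul, integral_const_mul, auxH_integral hδ]

lemma auxK_cont (a z : ℝ) : Continuous (auxK a z) := by unfold auxK; fun_prop

open MeasureTheory Set in
lemma greenSol_eq (a : ℝ) (f : ℝ → ℂ) (z : ℝ) :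
    greenSol a f z = -(1 / (2 * (a:ℂ))) * ∫ x in Ici (0:ℝ), (auxK a z x : ℂ) * f x := rfl


/-- the elliptic estimate with boundary-layer data:
`|α|‖φ‖_β + ‖φ'‖_β ≤ C‖f‖_{β,δ,1}`, with `C = C(β,P)` independent of `α` and `δ`. -/
theorem elliptic_estimate_bl (P : ℕ) (hP : 2 ≤ P) (β : ℝ) (hβ0 : 0 < β) (hβ : β < 1/2) :
    ∃ C : ℝ, 0 < C ∧ ∀ α : ℝ, 1 ≤ |α| → ∀ δ ∈ Set.Ioc (0:ℝ) 1, ∀ f : ℝ → ℂ,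
      ContinuousOn f (Set.Ici 0) → blNorm P β δ 1 f < ⊤ →
      ENNReal.ofReal |α| * expNorm β (greenSol |α| f)
        + expNorm β (derivWithin (greenSol |α| f) (Set.Ici 0))
        ≤ ENNReal.ofReal C * blNorm P β δ 1 f := by
  refine ⟨50 * Real.pi, by positivity, ?_⟩
  intro α hα δ hδ f hfc hfin
  obtain ⟨hδ0, -⟩ := hδ
  set a := |α| with ha_def
  have ha0 : 0 < a := by linarith
  set M := (blNorm P β δ 1 f).toReal with hMdef
  have hM : 0 ≤ M := ENNReal.toReal_nonneg
  have hMe : blNorm P β δ 1 f = ENNReal.ofReal M := (ENNReal.ofReal_toReal hfin.ne).symm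
  have hf : ∀ x, 0 ≤ x → (wt P 1 δ x)⁻¹ * Real.exp (β * x) * ‖f x‖ ≤ M := by
    intro x hx
    have h := le_iSup (fun z : Set.Ici (0:ℝ) =>
      ENNReal.ofReal ((wt P 1 δ z.1)⁻¹ * Real.exp (β * z.1) * ‖f z.1‖)) ⟨x, hx⟩
    exact (ENNReal.ofReal_le_iff_le_toReal hfin.ne).1 h
  have hpre : ‖-(1 / (2 * (a:ℂ)))‖ = 1 / (2 * a) := by
    rw [norm_neg, norm_div, norm_mul, Complex.norm_real, Real.norm_eq_abs, abs_of_pos ha0]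
    simp
  have hphi : ∀ z, 0 ≤ z → ‖greenSol a f z‖
      ≤ 1 / (2 * a) * (1 * (M * Real.exp (-(β * z)) * (10 * Real.pi))) := by
    intro z hz
    rw [greenSol_eq, norm_mul, hpre]
    gcongr
    exact (aux_int P hP hβ0 hβ hα hδ0 hM zero_le_one f hfc hf _ (auxK_cont a z)
      (fun x hx => by simpa using auxK_le hα hx hz)).2
  have hdphi : ∀ z, 0 ≤ z → ‖derivWithin (greenSol a f) (Set.Ici 0) z‖
      ≤ 2 * (M * Real.exp (-(β * z)) * (10 * Real.pi)) := by
    intro z hz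
    refine aux_derivWithin_le _ z _ hz (by positivity) ?_
    have hnear : ∀ᶠ w in nhdsWithin z (Set.Ici 0), w ∈ Metric.ball z (1 / a) :=
      mem_nhdsWithin_of_mem_nhds (Metric.ball_mem_nhds z (by positivity))
    filter_upwards [hnear, self_mem_nhdsWithin] with w hw hw0
    have hwz : a * |w - z| ≤ 1 := by
      rw [Metric.mem_ball, Real.dist_eq, lt_div_iff₀ ha0] at hw
      linarith
    have iw := (aux_int P hP hβ0 hβ hα hδ0 hM zero_le_one f hfc hf _ (auxK_cont a w)
      (fun x hx => by simpa using auxK_le hα hx hw0)).1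
    have iz := (aux_int P hP hβ0 hβ hα hδ0 hM zero_le_one f hfc hf _ (auxK_cont a z)
      (fun x hx => by simpa using auxK_le hα hx hz)).1
    have hd := (aux_int P hP hβ0 hβ hα hδ0 hM (c := 4 * a * |w - z|) (by positivity) f hfc hf
      (fun x => auxK a w x - auxK a z x) ((auxK_cont a w).sub (auxK_cont a z))
      (fun x hx => auxK_diff hα hx hz hwz)).2
    have he : greenSol a f w - greenSol a f z = -(1 / (2 * (a:ℂ))) *
        ∫ x in Set.Ici (0:ℝ), ((auxK a w x - auxK a z x : ℝ) : ℂ) * f x := by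
      rw [greenSol_eq, greenSol_eq, ← mul_sub, ← MeasureTheory.integral_sub iw iz]
      congr 2
      funext x
      push_cast
      ring
    rw [he, norm_mul, hpre]
    calc _ ≤ 1 / (2 * a) * (4 * a * |w - z| * (M * Real.exp (-(β * z)) * (10 * Real.pi))) := by
          gcongr
      _ = _ := by field_simp; ring
  have hexp : ∀ z, Real.exp (β * z) * Real.exp (-(β * z)) = 1 := by
    intro z; rw [← Real.exp_add]; simp
  have n1 : expNorm β (greenSol a f) ≤ ENNReal.ofReal (1 / (2 * a) * (M * (10 * Real.pi))) := by
    refine iSup_le fun z => ENNReal.ofReal_le_ofReal ?_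
    calc _ ≤ Real.exp (β * z.1) * (1 / (2 * a) * (1 * (M * Real.exp (-(β * z.1)) * (10 * Real.pi)))) := by
          gcongr; exact hphi z.1 z.2
      _ = (Real.exp (β * z.1) * Real.exp (-(β * z.1))) * (1 / (2 * a) * (M * (10 * Real.pi))) := by ring
      _ = _ := by rw [hexp, one_mul]
  have n2 : expNorm β (derivWithin (greenSol a f) (Set.Ici 0))
      ≤ ENNReal.ofReal (2 * (M * (10 * Real.pi))) := by
    refine iSup_le fun z => ENNReal.ofReal_le_ofReal ?_
    calc _ ≤ Real.exp (β * z.1) * (2 * (M * Real.exp (-(β * z.1)) * (10 * Real.pi))) := by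
          gcongr; exact hdphi z.1 z.2
      _ = (Real.exp (β * z.1) * Real.exp (-(β * z.1))) * (2 * (M * (10 * Real.pi))) := by ring
      _ = _ := by rw [hexp, one_mul]
  rw [hMe, ← ENNReal.ofReal_mul (by positivity)]
  calc _ ≤ ENNReal.ofReal a * ENNReal.ofReal (1 / (2 * a) * (M * (10 * Real.pi)))
        + ENNReal.ofReal (2 * (M * (10 * Real.pi))) := by gcongr
    _ = ENNReal.ofReal (a * (1 / (2 * a) * (M * (10 * Real.pi))) + 2 * (M * (10 * Real.pi))) := by
        rw [← ENNReal.ofReal_mul ha0.le, ← ENNReal.ofReal_add (by positivity) (by positivity)]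
    _ ≤ _ := by
        apply ENNReal.ofReal_le_ofReal
        have : a * (1 / (2 * a) * (M * (10 * Real.pi))) = M * (5 * Real.pi) := by
          field_simp; ring
        rw [this]
        have : 0 ≤ M * Real.pi := by positivity
        linarith
end

section
/- Fix an integer P ≥ 2 and let β ∈ (0, 1/2). There exists a constant C = C(β,P) such that for every real α with |α| ≥ 1, every δ ∈ (0,1], and every continuous f : [0,∞) → ℂ with ‖f‖_{β,δ,1} < ∞, the function φ(z) = −(1/(2|α|)) ∫₀^∞ ( e^{−|α||x−z|} − e^{−|α|(x+z)} ) f(x) dx, which is the decaying solution of φ'' − α²φ = f on (0,∞) with φ(0) = 0, satisfies α² ‖φ‖_β + |α| ‖φ'‖_β + ‖φ''‖_{β,δ,1} ≤ C |α| ‖f‖_{β,δ,1}. -/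
open scoped ENNReal

lemma aux_kernel (P : ℕ) (hP : 2 ≤ P) (β a δ z x : ℝ) (hβ0 : 0 < β) (hβ : β < 1/2) (ha : 1 ≤ a)
    (hδ : 0 < δ) (hx : 0 ≤ x) :
    Real.exp (-(a * |x - z|)) * (Real.exp (-(β * x)) * (1 + δ⁻¹ * (1 + (x / δ) ^ P)⁻¹)) ≤
      Real.exp (-(β * z)) * (8 * (1 + (x - z) ^ 2)⁻¹ + 2 * δ⁻¹ * (1 + (x / δ) ^ 2)⁻¹) := by
  set t := |x - z| with ht
  have ht0 : 0 ≤ t := abs_nonneg _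
  have h1 : Real.exp (-(a * t)) * Real.exp (-(β * x)) ≤
      Real.exp (-(β * z)) * Real.exp (-(t / 2)) := by
    rw [← Real.exp_add, ← Real.exp_add]
    apply Real.exp_le_exp.mpr
    have : z - x ≤ t := by rw [ht, abs_sub_comm]; exact le_abs_self _
    nlinarith
  have h2 : Real.exp (-(t / 2)) ≤ 8 * (1 + (x - z) ^ 2)⁻¹ := by
    rw [Real.exp_neg, ← div_eq_mul_inv, inv_eq_one_div, div_le_div_iff₀ (Real.exp_pos _) (by positivity)]
    have h3 := Real.quadratic_le_exp_of_nonneg (show 0 ≤ t / 2 by positivity)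
    have : (x - z) ^ 2 = t ^ 2 := by rw [ht, sq_abs]
    rw [this]
    nlinarith
  have h3 : (1 + (x / δ) ^ P)⁻¹ ≤ 2 * (1 + (x / δ) ^ 2)⁻¹ := by
    have hy : 0 ≤ x / δ := by positivity
    generalize x / δ = y at hy
    rw [← div_eq_mul_inv, inv_eq_one_div, div_le_div_iff₀ (by positivity) (by positivity)]
    have hyP : 0 ≤ y ^ P := by positivity
    rcases le_total y 1 with h | h
    · nlinarith
    · have := pow_le_pow_right₀ h hP
      nlinarith
  have h4 : Real.exp (-(t / 2)) ≤ 1 := Real.exp_le_one_iff.mpr (by linarith)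
  have hd : 0 < δ⁻¹ := by positivity
  have hQ : 0 ≤ (1 + (x / δ) ^ P)⁻¹ := by positivity
  calc _ = (Real.exp (-(a * t)) * Real.exp (-(β * x))) * (1 + δ⁻¹ * (1 + (x / δ) ^ P)⁻¹) := by ring
    _ ≤ (Real.exp (-(β * z)) * Real.exp (-(t / 2))) * (1 + δ⁻¹ * (1 + (x / δ) ^ P)⁻¹) := by gcongr
    _ = Real.exp (-(β * z)) * (Real.exp (-(t / 2)) + Real.exp (-(t / 2)) * (δ⁻¹ * (1 + (x / δ) ^ P)⁻¹)) := by ring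
    _ ≤ Real.exp (-(β * z)) * (8 * (1 + (x - z) ^ 2)⁻¹ + 1 * (δ⁻¹ * (2 * (1 + (x / δ) ^ 2)⁻¹))) := by
        gcongr
    _ = _ := by ring

lemma aux_H (δ z : ℝ) (hδ : 0 < δ) :
    MeasureTheory.Integrable (fun x : ℝ => 8 * (1 + (x - z) ^ 2)⁻¹ + 2 * δ⁻¹ * (1 + (x / δ) ^ 2)⁻¹) ∧
    ∫ x : ℝ, (8 * (1 + (x - z) ^ 2)⁻¹ + 2 * δ⁻¹ * (1 + (x / δ) ^ 2)⁻¹) = 10 * Real.pi := by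
  have i1 : MeasureTheory.Integrable (fun x : ℝ => 8 * (1 + (x - z) ^ 2)⁻¹) :=
    (integrable_inv_one_add_sq.comp_sub_right z).const_mul 8
  have i2 : MeasureTheory.Integrable (fun x : ℝ => 2 * δ⁻¹ * (1 + (x / δ) ^ 2)⁻¹) :=
    (integrable_inv_one_add_sq.comp_div hδ.ne').const_mul _
  refine ⟨i1.add i2, ?_⟩
  rw [MeasureTheory.integral_add i1 i2, MeasureTheory.integral_const_mul,
    MeasureTheory.integral_const_mul,
    MeasureTheory.integral_sub_right_eq_self (fun x : ℝ => (1 + x ^ 2)⁻¹) z,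
    MeasureTheory.Measure.integral_comp_div (fun x : ℝ => (1 + x ^ 2)⁻¹) δ,
    integral_univ_inv_one_add_sq, abs_of_pos hδ, smul_eq_mul]
  field_simp
  norm_num

lemma aux_core (P : ℕ) (hP : 2 ≤ P) (β a δ z N : ℝ) (hβ0 : 0 < β) (hβ : β < 1/2) (ha : 1 ≤ a)
    (hδ : 0 < δ) (hN : 0 ≤ N) (g : ℝ → ℂ) (hg : Continuous g)
    (hb : ∀ x, 0 ≤ x → ‖g x‖ ≤ N * (Real.exp (-(β * x)) * (1 + δ⁻¹ * (1 + (x / δ) ^ P)⁻¹)))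
    (S : Set ℝ) (hS : MeasurableSet S) (hS0 : ∀ x ∈ S, 0 ≤ x)
    (k : ℝ → ℝ) (hk : Continuous k) (hkb : ∀ x ∈ S, |k x| ≤ Real.exp (-(a * |x - z|))) :
    MeasureTheory.IntegrableOn (fun x => ((k x : ℝ) : ℂ) * g x) S ∧
    ‖∫ x in S, ((k x : ℝ) : ℂ) * g x‖ ≤ 10 * Real.pi * N * Real.exp (-(β * z)) := by
  obtain ⟨iH, vH⟩ := aux_H δ z hδ
  have iH' := iH.const_mul (N * Real.exp (-(β * z)))
  have hp : ∀ x ∈ S, ‖((k x : ℝ) : ℂ) * g x‖ ≤ (N * Real.exp (-(β * z))) *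
      (8 * (1 + (x - z) ^ 2)⁻¹ + 2 * δ⁻¹ * (1 + (x / δ) ^ 2)⁻¹) := by
    intro x hx
    have h0 := hS0 x hx
    rw [norm_mul, Complex.norm_real, Real.norm_eq_abs]
    calc _ ≤ Real.exp (-(a * |x - z|)) *
          (N * (Real.exp (-(β * x)) * (1 + δ⁻¹ * (1 + (x / δ) ^ P)⁻¹))) := by
          gcongr
          · exact hkb x hx
          · exact hb x h0
      _ = N * (Real.exp (-(a * |x - z|)) *
          (Real.exp (-(β * x)) * (1 + δ⁻¹ * (1 + (x / δ) ^ P)⁻¹))) := by ring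
      _ ≤ N * _ := mul_le_mul_of_nonneg_left
          (aux_kernel P hP β a δ z x hβ0 hβ ha hδ h0) hN
      _ = _ := by ring
  have hae : ∀ᵐ x ∂(MeasureTheory.volume.restrict S), ‖((k x : ℝ) : ℂ) * g x‖ ≤
      (N * Real.exp (-(β * z))) *
      (8 * (1 + (x - z) ^ 2)⁻¹ + 2 * δ⁻¹ * (1 + (x / δ) ^ 2)⁻¹) :=
    (MeasureTheory.ae_restrict_iff' hS).mpr (Filter.Eventually.of_forall hp)
  refine ⟨iH'.integrableOn.mono' ?_ hae, ?_⟩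
  · exact ((Complex.continuous_ofReal.comp hk).mul hg).aestronglyMeasurable
  · refine (MeasureTheory.norm_integral_le_of_norm_le iH'.integrableOn hae).trans ?_
    refine (MeasureTheory.setIntegral_le_integral iH' (Filter.Eventually.of_forall ?_)).trans ?_
    · intro x
      show 0 ≤ _
      positivity
    · rw [MeasureTheory.integral_const_mul, vH]
      apply le_of_eq; ring

/-- explicit building blocks -/
noncomputable def auxA (a : ℝ) (g : ℝ → ℂ) (z : ℝ) : ℂ :=
  Complex.exp (-(a * z)) * ∫ x in (0:ℝ)..z, Complex.exp (a * x) * g x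

noncomputable def auxB (a : ℝ) (g : ℝ → ℂ) (K : ℂ) (z : ℝ) : ℂ :=
  Complex.exp (a * z) * (K - ∫ x in (0:ℝ)..z, Complex.exp (-(a * x)) * g x)

noncomputable def auxE (a : ℝ) (K : ℂ) (z : ℝ) : ℂ := Complex.exp (-(a * z)) * K

lemma aux_dexp (c : ℂ) (z : ℝ) :
    HasDerivAt (fun z : ℝ => Complex.exp (c * z)) (c * Complex.exp (c * z)) z := by
  have h : HasDerivAt (fun z : ℝ => c * (z : ℂ)) (c * 1) z :=
    (Complex.ofRealCLM.hasDerivAt (x := z)).const_mul c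
  have := h.cexp
  simpa [mul_comm] using this

lemma auxA_deriv (a : ℝ) (g : ℝ → ℂ) (hg : Continuous g) (z : ℝ) :
    HasDerivAt (auxA a g) (-(a * auxA a g z) + g z) z := by
  have hc : Continuous (fun x : ℝ => Complex.exp (a * x) * g x) := by fun_prop
  have h1 := intervalIntegral.integral_hasDerivAt_right (hc.intervalIntegrable 0 z)
    (hc.stronglyMeasurableAtFilter _ _) hc.continuousAt
  have h2 := (aux_dexp (-a) z).mul h1
  simp only [neg_mul] at h2
  refine h2.congr_deriv ?_
  unfold auxA
  have : Complex.exp (-(a * z)) * Complex.exp (a * z) = 1 := by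
    rw [← Complex.exp_add]; simp
  linear_combination (g z) * this

lemma auxB_deriv (a : ℝ) (g : ℝ → ℂ) (hg : Continuous g) (K : ℂ) (z : ℝ) :
    HasDerivAt (auxB a g K) (a * auxB a g K z - g z) z := by
  have hc : Continuous (fun x : ℝ => Complex.exp (-(a * x)) * g x) := by fun_prop
  have h1 := intervalIntegral.integral_hasDerivAt_right (hc.intervalIntegrable 0 z)
    (hc.stronglyMeasurableAtFilter _ _) hc.continuousAt
  have h2 := (aux_dexp a z).mul (h1.const_sub K)
  refine h2.congr_deriv ?_
  unfold auxB
  have : Complex.exp (a * z) * Complex.exp (-(a * z)) = 1 := by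
    rw [← Complex.exp_add]; simp
  linear_combination -(g z) * this

lemma auxE_deriv (a : ℝ) (K : ℂ) (z : ℝ) :
    HasDerivAt (auxE a K) (-(a * auxE a K z)) z := by
  have h2 := (aux_dexp (-a) z).mul_const K
  simp only [neg_mul] at h2
  refine h2.congr_deriv ?_
  unfold auxE
  ring

/-- Everything about the solution at a point. -/
lemma aux_main (P : ℕ) (hP : 2 ≤ P) (β a δ N : ℝ) (hβ0 : 0 < β) (hβ : β < 1/2) (ha : 1 ≤ a)
    (hδ : 0 < δ) (hN : 0 ≤ N) (f : ℝ → ℂ) (hf : ContinuousOn f (Set.Ici 0))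
    (hb : ∀ x, 0 ≤ x → ‖f x‖ ≤ N * (Real.exp (-(β * x)) * (1 + δ⁻¹ * (1 + (x / δ) ^ P)⁻¹)))
    (z : ℝ) (hz : 0 ≤ z) :
    ‖greenSol a f z‖ ≤ 1 / (2 * a) * (3 * (10 * Real.pi * N * Real.exp (-(β * z)))) ∧
    ‖derivWithin (greenSol a f) (Set.Ici 0) z‖ ≤
      1 / 2 * (3 * (10 * Real.pi * N * Real.exp (-(β * z)))) ∧
    derivWithin (derivWithin (greenSol a f) (Set.Ici 0)) (Set.Ici 0) z =
      f z + a ^ 2 * greenSol a f z := by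
  have ha0 : (a : ℂ) ≠ 0 := by
    have : a ≠ 0 := by linarith
    exact_mod_cast this
  obtain ⟨g, hg, hgf⟩ : ∃ g : ℝ → ℂ, Continuous g ∧ ∀ x, 0 ≤ x → g x = f x := by
    refine ⟨fun x => f (max x 0), ?_, fun x hx => by simp [hx]⟩
    exact hf.comp_continuous (by fun_prop) (fun x => Set.mem_Ici.mpr (le_max_right x 0))
  have hb' : ∀ x, 0 ≤ x → ‖g x‖ ≤ N * (Real.exp (-(β * x)) * (1 + δ⁻¹ * (1 + (x / δ) ^ P)⁻¹)) :=
    fun x hx => by rw [hgf x hx]; exact hb x hx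
  set K : ℂ := ∫ x in Set.Ioi (0:ℝ), ((Real.exp (-(a * x)) : ℝ) : ℂ) * g x with hK
  have core := fun z => aux_core P hP β a δ z N hβ0 hβ ha hδ hN g hg hb'
  have key : ∀ z, 0 ≤ z →
      greenSol a f z = -(1 / (2 * (a:ℂ))) * (auxA a g z + auxB a g K z - auxE a K z) ∧
      ‖auxA a g z‖ ≤ 10 * Real.pi * N * Real.exp (-(β * z)) ∧
      ‖auxB a g K z‖ ≤ 10 * Real.pi * N * Real.exp (-(β * z)) ∧
      ‖auxE a K z‖ ≤ 10 * Real.pi * N * Real.exp (-(β * z)) := by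
    intro z hz
    have cA := core z (Set.Ioc 0 z) measurableSet_Ioc (fun x hx => hx.1.le)
      (fun x => Real.exp (-(a * |x - z|))) (by fun_prop)
      (fun x hx => by rw [abs_of_pos (Real.exp_pos _)])
    have cB := core z (Set.Ioi z) measurableSet_Ioi (fun x hx => hz.trans (le_of_lt hx))
      (fun x => Real.exp (-(a * |x - z|))) (by fun_prop)
      (fun x hx => by rw [abs_of_pos (Real.exp_pos _)])
    have cE := core z (Set.Ioi 0) measurableSet_Ioi (fun x hx => le_of_lt hx)
      (fun x => Real.exp (-(a * (x + z)))) (by fun_prop)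
      (fun x hx => by
        have hx' : 0 < x := hx
        rw [abs_of_pos (Real.exp_pos _)]
        apply Real.exp_le_exp.mpr
        have : |x - z| ≤ x + z := abs_le.mpr ⟨by linarith, by linarith⟩
        nlinarith)
    have cK := core 0 (Set.Ioi 0) measurableSet_Ioi (fun x hx => le_of_lt hx)
      (fun x => Real.exp (-(a * x))) (by fun_prop)
      (fun x hx => by
        have hx' : 0 < x := hx
        rw [abs_of_pos (Real.exp_pos _), sub_zero, abs_of_pos hx'])
    have eA : ∫ x in Set.Ioc 0 z, ((Real.exp (-(a * |x - z|)) : ℝ) : ℂ) * g x = auxA a g z := by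
      rw [auxA, intervalIntegral.integral_of_le hz, ← MeasureTheory.integral_const_mul]
      apply MeasureTheory.setIntegral_congr_fun measurableSet_Ioc
      intro x hx
      simp only
      rw [abs_of_nonpos (by linarith [hx.2]), ← mul_assoc, ← Complex.exp_add]
      push_cast
      congr 2
      ring
    have eB : ∫ x in Set.Ioi z, ((Real.exp (-(a * |x - z|)) : ℝ) : ℂ) * g x = auxB a g K z := by
      have hKs : K = (∫ x in (0:ℝ)..z, Complex.exp (-(a * x)) * g x) +
          ∫ x in Set.Ioi z, ((Real.exp (-(a * x)) : ℝ) : ℂ) * g x := by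
        rw [hK, ← Set.Ioc_union_Ioi_eq_Ioi hz, MeasureTheory.setIntegral_union
          Set.Ioc_disjoint_Ioi_same measurableSet_Ioi
          (cK.1.mono_set Set.Ioc_subset_Ioi_self) (cK.1.mono_set (Set.Ioi_subset_Ioi hz)),
          intervalIntegral.integral_of_le hz]
        push_cast
        rfl
      rw [auxB, hKs, add_sub_cancel_left, ← MeasureTheory.integral_const_mul]
      apply MeasureTheory.setIntegral_congr_fun measurableSet_Ioi
      intro x hx
      have hx' : z < x := hx
      simp only
      rw [abs_of_nonneg (by linarith), ← mul_assoc]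
      push_cast
      rw [← Complex.exp_add]
      congr 2
      ring
    have eE : ∫ x in Set.Ioi 0, ((Real.exp (-(a * (x + z))) : ℝ) : ℂ) * g x = auxE a K z := by
      rw [auxE, hK, ← MeasureTheory.integral_const_mul]
      apply MeasureTheory.setIntegral_congr_fun measurableSet_Ioi
      intro x hx
      simp only
      rw [← mul_assoc]
      push_cast
      rw [← Complex.exp_add]
      congr 2
      ring
    refine ⟨?_, eA ▸ cA.2, eB ▸ cB.2, eE ▸ cE.2⟩
    rw [greenSol]
    congr 1
    rw [MeasureTheory.integral_Ici_eq_integral_Ioi, ← eA, ← eB, ← eE,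
      ← MeasureTheory.setIntegral_union Set.Ioc_disjoint_Ioi_same measurableSet_Ioi cA.1 cB.1,
      Set.Ioc_union_Ioi_eq_Ioi hz]
    have hu := cA.1.union cB.1
    rw [Set.Ioc_union_Ioi_eq_Ioi hz] at hu
    rw [← MeasureTheory.integral_sub hu cE.1]
    apply MeasureTheory.setIntegral_congr_fun measurableSet_Ioi
    intro x hx
    simp only
    rw [hgf x (le_of_lt hx)]
    push_cast
    ring
  have hd1 : ∀ z, 0 ≤ z → derivWithin (greenSol a f) (Set.Ici 0) z =
      (1 / 2) * (auxA a g z - auxB a g K z - auxE a K z) := by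
    intro z hz
    have h := (((auxA_deriv a g hg z).add (auxB_deriv a g hg K z)).sub
      (auxE_deriv a K z)).const_mul (-(1 / (2 * (a:ℂ))))
    have h' := (h.hasDerivWithinAt (s := Set.Ici 0)).congr_of_mem
      (f₁ := greenSol a f) (fun x hx => (key x hx).1) hz
    rw [h'.derivWithin (uniqueDiffOn_Ici 0 z hz)]
    field_simp
    ring
  have hd2 : derivWithin (derivWithin (greenSol a f) (Set.Ici 0)) (Set.Ici 0) z =
      f z + a ^ 2 * greenSol a f z := by
    have h := (((auxA_deriv a g hg z).sub (auxB_deriv a g hg K z)).sub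
      (auxE_deriv a K z)).const_mul (1 / 2 : ℂ)
    have h' := (h.hasDerivWithinAt (s := Set.Ici 0)).congr_of_mem
      (f₁ := derivWithin (greenSol a f) (Set.Ici 0)) (fun x hx => hd1 x hx) hz
    rw [h'.derivWithin (uniqueDiffOn_Ici 0 z hz), (key z hz).1, hgf z hz]
    field_simp
    ring
  obtain ⟨k0, kA, kB, kE⟩ := key z hz
  refine ⟨?_, ?_, hd2⟩
  · rw [k0, norm_mul]
    have : ‖-(1 / (2 * (a:ℂ)))‖ = 1 / (2 * a) := by
      rw [norm_neg, norm_div, norm_mul, Complex.norm_real, Real.norm_of_nonneg (by linarith)]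
      simp
    rw [this]
    gcongr
    have t1 := norm_sub_le (auxA a g z + auxB a g K z) (auxE a K z)
    have t2 := norm_add_le (auxA a g z) (auxB a g K z)
    linarith
  · rw [hd1 z hz, norm_mul]
    have : ‖(1 / 2 : ℂ)‖ = 1 / 2 := by simp
    rw [this]
    gcongr
    have t1 := norm_sub_le (auxA a g z - auxB a g K z) (auxE a K z)
    have t2 := norm_sub_le (auxA a g z) (auxB a g K z)
    linarith

/-- the second-order elliptic estimate with boundary-layer data:
`α²‖φ‖_β + |α|‖φ'‖_β + ‖φ''‖_{β,δ,1} ≤ C|α|‖f‖_{β,δ,1}`,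
with `C = C(β,P)` independent of `α` and `δ`. -/
theorem elliptic_estimate_bl_second_order (P : ℕ) (hP : 2 ≤ P)
    (β : ℝ) (hβ0 : 0 < β) (hβ : β < 1/2) :
    ∃ C : ℝ, 0 < C ∧ ∀ α : ℝ, 1 ≤ |α| → ∀ δ ∈ Set.Ioc (0:ℝ) 1, ∀ f : ℝ → ℂ,
      ContinuousOn f (Set.Ici 0) → blNorm P β δ 1 f < ⊤ →
      ENNReal.ofReal (α ^ 2) * expNorm β (greenSol |α| f)
        + ENNReal.ofReal |α| * expNorm β (derivWithin (greenSol |α| f) (Set.Ici 0))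
        + blNorm P β δ 1
            (derivWithin (derivWithin (greenSol |α| f) (Set.Ici 0)) (Set.Ici 0))
        ≤ ENNReal.ofReal (C * |α|) * blNorm P β δ 1 f := by
  refine ⟨45 * Real.pi + 1, by positivity, ?_⟩
  intro α hα δ hδ f hf hfin
  rw [← sq_abs α]
  generalize |α| = a at hα
  have hδ0 : 0 < δ := hδ.1
  have ha0 : 0 < a := by linarith
  have hw : ∀ z, wt P 1 δ z = 1 + δ⁻¹ * (1 + (z / δ) ^ P)⁻¹ := by
    intro z
    simp [wt, Nat.sub_add_cancel (show 1 ≤ P by omega)]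
  have hw1 : ∀ z, 0 ≤ z → 1 ≤ wt P 1 δ z := by
    intro z hz
    rw [hw]
    have : 0 ≤ δ⁻¹ * (1 + (z / δ) ^ P)⁻¹ := by positivity
    linarith
  obtain ⟨N, hN, hNe⟩ : ∃ N : ℝ, 0 ≤ N ∧ blNorm P β δ 1 f = ENNReal.ofReal N :=
    ⟨_, ENNReal.toReal_nonneg, (ENNReal.ofReal_toReal hfin.ne).symm⟩
  have hfN : ∀ z, 0 ≤ z → (wt P 1 δ z)⁻¹ * Real.exp (β * z) * ‖f z‖ ≤ N := by
    intro z hz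
    rw [← ENNReal.ofReal_le_ofReal_iff hN, ← hNe]
    exact le_iSup (fun z : Set.Ici (0:ℝ) =>
      ENNReal.ofReal ((wt P 1 δ z.1)⁻¹ * Real.exp (β * z.1) * ‖f z.1‖)) ⟨z, hz⟩
  have hb : ∀ x, 0 ≤ x → ‖f x‖ ≤ N * (Real.exp (-(β * x)) * (1 + δ⁻¹ * (1 + (x / δ) ^ P)⁻¹)) := by
    intro x hx
    rw [← hw]
    have hW := hw1 x hx
    have hWp : 0 < wt P 1 δ x := by linarith
    calc ‖f x‖ = ((wt P 1 δ x)⁻¹ * Real.exp (β * x) * ‖f x‖) *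
          (Real.exp (-(β * x)) * wt P 1 δ x) := by
          rw [Real.exp_neg]
          field_simp
      _ ≤ _ := by
          gcongr
          exact hfN x hx
  have main := aux_main P hP β a δ N hβ0 hβ hα hδ0 hN f hf hb
  have hee : ∀ z, Real.exp (β * z) * Real.exp (-(β * z)) = 1 := by
    intro z
    rw [← Real.exp_add]; simp
  have hpt : ∀ z, 0 ≤ z → Real.exp (β * z) * ‖greenSol a f z‖ ≤ 15 * Real.pi * N / a := by
    intro z hz
    calc _ ≤ Real.exp (β * z) *
          (1 / (2 * a) * (3 * (10 * Real.pi * N * Real.exp (-(β * z))))) := by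
          gcongr
          exact (main z hz).1
      _ = 15 * Real.pi * N / a * (Real.exp (β * z) * Real.exp (-(β * z))) := by
          field_simp
          ring
      _ = _ := by rw [hee, mul_one]
  have e1 : expNorm β (greenSol a f) ≤ ENNReal.ofReal (15 * Real.pi * N / a) :=
    iSup_le fun z => ENNReal.ofReal_le_ofReal (hpt z.1 z.2)
  have e2 : expNorm β (derivWithin (greenSol a f) (Set.Ici 0)) ≤
      ENNReal.ofReal (15 * Real.pi * N) := by
    refine iSup_le fun z => ENNReal.ofReal_le_ofReal ?_
    calc _ ≤ Real.exp (β * z.1) *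
          (1 / 2 * (3 * (10 * Real.pi * N * Real.exp (-(β * z.1))))) := by
          gcongr
          exact (main z.1 z.2).2.1
      _ = 15 * Real.pi * N * (Real.exp (β * z.1) * Real.exp (-(β * z.1))) := by
          ring
      _ = _ := by rw [hee, mul_one]
  have e3 : blNorm P β δ 1
      (derivWithin (derivWithin (greenSol a f) (Set.Ici 0)) (Set.Ici 0)) ≤
      ENNReal.ofReal (N + 15 * Real.pi * N * a) := by
    refine iSup_le fun z => ENNReal.ofReal_le_ofReal ?_
    rw [(main z.1 z.2).2.2]
    have hW := hw1 z.1 z.2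
    have hW' : (wt P 1 δ z.1)⁻¹ ≤ 1 := inv_le_one_of_one_le₀ hW
    have hWp : 0 < (wt P 1 δ z.1)⁻¹ := by positivity
    have hn : ‖f z.1 + (a:ℂ) ^ 2 * greenSol a f z.1‖ ≤ ‖f z.1‖ + a ^ 2 * ‖greenSol a f z.1‖ := by
      refine (norm_add_le _ _).trans (le_of_eq ?_)
      rw [norm_mul, norm_pow, Complex.norm_real, Real.norm_of_nonneg ha0.le]
    calc _ ≤ (wt P 1 δ z.1)⁻¹ * Real.exp (β * z.1) *
          (‖f z.1‖ + a ^ 2 * ‖greenSol a f z.1‖) := by gcongr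
      _ = (wt P 1 δ z.1)⁻¹ * Real.exp (β * z.1) * ‖f z.1‖ +
          (wt P 1 δ z.1)⁻¹ * (a ^ 2 * (Real.exp (β * z.1) * ‖greenSol a f z.1‖)) := by ring
      _ ≤ N + 1 * (a ^ 2 * (15 * Real.pi * N / a)) := by
          gcongr
          · exact hfN z.1 z.2
          · exact hpt z.1 z.2
      _ = _ := by field_simp
  rw [hNe]
  calc _ ≤ ENNReal.ofReal (a ^ 2) * ENNReal.ofReal (15 * Real.pi * N / a) +
        ENNReal.ofReal a * ENNReal.ofReal (15 * Real.pi * N) +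
        ENNReal.ofReal (N + 15 * Real.pi * N * a) := by gcongr
    _ = ENNReal.ofReal (a ^ 2 * (15 * Real.pi * N / a) + a * (15 * Real.pi * N) +
        (N + 15 * Real.pi * N * a)) := by
        rw [← ENNReal.ofReal_mul (by positivity), ← ENNReal.ofReal_mul (by positivity),
          ← ENNReal.ofReal_add (by positivity) (by positivity),
          ← ENNReal.ofReal_add (by positivity) (by positivity)]
    _ ≤ _ := by
        rw [← ENNReal.ofReal_mul (by positivity)]
        apply ENNReal.ofReal_le_ofReal
        have : a ^ 2 * (15 * Real.pi * N / a) = 15 * Real.pi * N * a := by field_simp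
        rw [this]
        nlinarith
end

section
/- Fix an integer P ≥ 2 and let β ∈ (0, 1/2). There exists a constant C = C(β,P) such that for every real α with |α| ≥ 1, every δ ∈ (0,1], and every continuous f : [0,∞) → ℂ with ‖f‖_{β,δ,1} < ∞, the function φ(z) = −(1/(2|α|)) ∫₀^∞ ( e^{−|α||x−z|} − e^{−|α|(x+z)} ) f(x) dx, which is the decaying solution of φ'' − α²φ = f on (0,∞) with φ(0) = 0, satisfies the vanishing-at-the-boundary pointwise bound |α φ(z)| ≤ C (1 + |α|) · (z/(1+z)) · e^{−βz} · ‖f‖_{β,δ,1} for all z ≥ 0. -/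
open scoped ENNReal

/-- pointwise bound on the weight -/
lemma wt_bound (P : ℕ) (hP : 2 ≤ P) (δ x : ℝ) (hδ : 0 < δ) (hx : 0 ≤ x) :
    0 < wt P 1 δ x ∧ wt P 1 δ x ≤ 1 + 2 * (δ⁻¹ * (1 + (x / δ) ^ 2)⁻¹) := by
  have hy : 0 ≤ x / δ := by positivity
  have hP1 : P - 1 + 1 = P := by omega
  have e : wt P 1 δ x = 1 + δ⁻¹ * (1 + (x / δ) ^ P)⁻¹ := by
    simp [wt, hP1]
  rw [e]
  refine ⟨by positivity, ?_⟩
  have key : (1 + (x / δ) ^ P)⁻¹ ≤ 2 * (1 + (x / δ) ^ 2)⁻¹ := by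
    have h : 1 + (x / δ) ^ 2 ≤ 2 * (1 + (x / δ) ^ P) := by
      have hp : 0 ≤ (x / δ) ^ P := by positivity
      rcases le_total (x / δ) 1 with h1 | h1
      · nlinarith
      · have := pow_le_pow_right₀ h1 hP
        linarith
    rw [← div_eq_mul_inv, inv_eq_one_div, div_le_div_iff₀ (by positivity) (by positivity)]
    linarith
  have := mul_le_mul_of_nonneg_left key (inv_pos.mpr hδ).le
  linarith

lemma f_bound (P : ℕ) (hP : 2 ≤ P) (β δ : ℝ) (hδ : 0 < δ) (f : ℝ → ℂ)
    (hf : blNorm P β δ 1 f < ⊤) (x : ℝ) (hx : 0 ≤ x) :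
    ‖f x‖ ≤ (1 + 2 * (δ⁻¹ * (1 + (x / δ) ^ 2)⁻¹)) * Real.exp (-(β * x)) *
      (blNorm P β δ 1 f).toReal := by
  obtain ⟨w0, w1⟩ := wt_bound P hP δ x hδ hx
  have h : (wt P 1 δ x)⁻¹ * Real.exp (β * x) * ‖f x‖ ≤ (blNorm P β δ 1 f).toReal := by
    rw [← ENNReal.ofReal_le_iff_le_toReal hf.ne]
    exact le_iSup (fun z : Set.Ici (0:ℝ) =>
      ENNReal.ofReal ((wt P 1 δ z.1)⁻¹ * Real.exp (β * z.1) * ‖f z.1‖)) ⟨x, hx⟩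
  calc ‖f x‖ = wt P 1 δ x * Real.exp (-(β * x)) *
        ((wt P 1 δ x)⁻¹ * Real.exp (β * x) * ‖f x‖) := by
        rw [Real.exp_neg]
        field_simp
    _ ≤ wt P 1 δ x * Real.exp (-(β * x)) * (blNorm P β δ 1 f).toReal := by gcongr
    _ ≤ _ := by gcongr

lemma kernel_bound (a β x z : ℝ) (ha : 1 ≤ a) (hβ0 : 0 < β) (hβ : β < 1/2)
    (hx : 0 ≤ x) (hz : 0 ≤ z) :
    0 ≤ Real.exp (-(a * |x - z|)) - Real.exp (-(a * (x + z))) ∧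
    (Real.exp (-(a * |x - z|)) - Real.exp (-(a * (x + z)))) * Real.exp (-(β * x)) ≤
      4 * a * (z / (1 + z)) * Real.exp (-(β * z)) * Real.exp (-(|x - z| / 2)) := by
  have habs : |x - z| ≤ x + z := by rw [abs_le]; constructor <;> linarith
  have habs2 : x + z - |x - z| ≤ 2 * z := by have := le_abs_self (x - z); linarith
  constructor
  · rw [sub_nonneg, Real.exp_le_exp]; nlinarith
  have e1 : Real.exp (-(a * (x + z))) =
      Real.exp (-(a * |x - z|)) * Real.exp (-(a * (x + z - |x - z|))) := by
    rw [← Real.exp_add]; congr 1; ring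
  have h1 : 1 - Real.exp (-(a * (x + z - |x - z|))) ≤ 4 * a * (z / (1 + z)) := by
    rcases le_total z 1 with h | h
    · have := Real.add_one_le_exp (-(a * (x + z - |x - z|)))
      have h2 : a * (x + z - |x - z|) ≤ a * (2 * z) := by gcongr
      have h3 : z / 2 ≤ z / (1 + z) := by gcongr; linarith
      nlinarith
    · have := Real.exp_pos (-(a * (x + z - |x - z|)))
      have h3 : 1 / 2 ≤ z / (1 + z) := by
        rw [div_le_div_iff₀ (by positivity) (by positivity)]; linarith
      nlinarith
  have h2 : Real.exp (-(a * |x - z|)) * Real.exp (-(β * x)) ≤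
      Real.exp (-(β * z)) * Real.exp (-(|x - z| / 2)) := by
    rw [← Real.exp_add, ← Real.exp_add, Real.exp_le_exp]
    have h4 : z - x ≤ |x - z| := by rw [abs_sub_comm]; exact le_abs_self _
    have h5 := abs_nonneg (x - z)
    nlinarith
  calc _ = (1 - Real.exp (-(a * (x + z - |x - z|)))) *
        (Real.exp (-(a * |x - z|)) * Real.exp (-(β * x))) := by rw [e1]; ring
    _ ≤ (4 * a * (z / (1 + z))) * (Real.exp (-(β * z)) * Real.exp (-(|x - z| / 2))) := by
        gcongr
    _ = _ := by ring

lemma exp_bound (u : ℝ) : Real.exp (-(|u| / 2)) ≤ 8 * (1 + u ^ 2)⁻¹ := by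
  have h := Real.quadratic_le_exp_of_nonneg (x := |u| / 2) (by positivity)
  rw [Real.exp_neg, ← div_eq_mul_inv, inv_eq_one_div,
    div_le_div_iff₀ (by positivity) (by positivity)]
  have := sq_abs u
  have := abs_nonneg u
  nlinarith

lemma dom_integrable (δ z : ℝ) (hδ : 0 < δ) :
    MeasureTheory.Integrable
      (fun x : ℝ => 8 * (1 + (x - z) ^ 2)⁻¹ + 2 * (δ⁻¹ * (1 + (x / δ) ^ 2)⁻¹)) ∧
    ∫ x : ℝ, (8 * (1 + (x - z) ^ 2)⁻¹ + 2 * (δ⁻¹ * (1 + (x / δ) ^ 2)⁻¹)) =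
      10 * Real.pi := by
  have i1 : MeasureTheory.Integrable (fun x : ℝ => 8 * (1 + (x - z) ^ 2)⁻¹) :=
    (integrable_inv_one_add_sq.comp_sub_right z).const_mul 8
  have i2 : MeasureTheory.Integrable (fun x : ℝ => 2 * (δ⁻¹ * (1 + (x / δ) ^ 2)⁻¹)) :=
    ((integrable_inv_one_add_sq.comp_div hδ.ne').const_mul _).const_mul 2
  refine ⟨i1.add i2, ?_⟩
  rw [MeasureTheory.integral_add i1 i2, MeasureTheory.integral_const_mul,
    MeasureTheory.integral_const_mul, MeasureTheory.integral_const_mul,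
    MeasureTheory.integral_sub_right_eq_self (fun x : ℝ => (1 + x ^ 2)⁻¹) z,
    MeasureTheory.Measure.integral_comp_div (fun x : ℝ => (1 + x ^ 2)⁻¹) δ,
    integral_univ_inv_one_add_sq, abs_of_pos hδ, smul_eq_mul]
  field_simp
  norm_num

/-- the vanishing-at-the-boundary pointwise bound
`|αφ(z)| ≤ C(1+|α|) (z/(1+z)) e^{−βz} ‖f‖_{β,δ,1}` with `C = C(β,P)`. -/
theorem vertical_velocity_pointwise_bound (P : ℕ) (hP : 2 ≤ P)
    (β : ℝ) (hβ0 : 0 < β) (hβ : β < 1/2) :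
    ∃ C : ℝ, 0 < C ∧ ∀ α : ℝ, 1 ≤ |α| → ∀ δ ∈ Set.Ioc (0:ℝ) 1, ∀ f : ℝ → ℂ,
      ContinuousOn f (Set.Ici 0) → blNorm P β δ 1 f < ⊤ →
      ∀ z : ℝ, 0 ≤ z →
        ‖(α:ℂ) * greenSol |α| f z‖ ≤
          C * (1 + |α|) * (z / (1 + z)) * Real.exp (-(β * z)) *
            (blNorm P β δ 1 f).toReal := by
  refine ⟨20 * Real.pi, by positivity, ?_⟩
  intro α hα δ hδ f _ hN z hz
  set a := |α| with ha
  set N := (blNorm P β δ 1 f).toReal with hNd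
  have hN0 : 0 ≤ N := ENNReal.toReal_nonneg
  set K := 4 * a * (z / (1 + z)) * Real.exp (-(β * z)) * N with hK
  have hK0 : 0 ≤ K := by positivity
  obtain ⟨di, dv⟩ := dom_integrable δ z hδ.1
  have hI : ‖∫ x in Set.Ici (0:ℝ),
      ((Real.exp (-(a * |x - z|)) - Real.exp (-(a * (x + z))) : ℝ) : ℂ) * f x‖ ≤
      K * (10 * Real.pi) := by
    rw [← dv, ← MeasureTheory.integral_const_mul]
    refine (MeasureTheory.norm_integral_le_of_norm_le
      (di.const_mul K).integrableOn.integrable ?_).trans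
      (MeasureTheory.setIntegral_le_integral (di.const_mul K) ?_)
    · refine (MeasureTheory.ae_restrict_iff' measurableSet_Ici).mpr (.of_forall ?_)
      intro x hx
      obtain ⟨k0, k1⟩ := kernel_bound a β x z hα hβ0 hβ hx hz
      have hf := f_bound P hP β δ hδ.1 f hN x hx
      have hd := hδ.1
      rw [norm_mul, Complex.norm_real, Real.norm_of_nonneg k0]
      set S := δ⁻¹ * (1 + (x / δ) ^ 2)⁻¹ with hS
      have hS0 : 0 ≤ S := by positivity
      have hE := exp_bound (x - z)
      have hE1 : Real.exp (-(|x - z| / 2)) ≤ 1 := by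
        rw [Real.exp_le_one_iff]; have := abs_nonneg (x - z); linarith
      calc _ ≤ (Real.exp (-(a * |x - z|)) - Real.exp (-(a * (x + z)))) *
            ((1 + 2 * S) * Real.exp (-(β * x)) * N) := by gcongr
        _ = ((Real.exp (-(a * |x - z|)) - Real.exp (-(a * (x + z)))) * Real.exp (-(β * x))) *
            ((1 + 2 * S) * N) := by ring
        _ ≤ (4 * a * (z / (1 + z)) * Real.exp (-(β * z)) * Real.exp (-(|x - z| / 2))) *
            ((1 + 2 * S) * N) := by gcongr
        _ = K * (Real.exp (-(|x - z| / 2)) + Real.exp (-(|x - z| / 2)) * (2 * S)) := by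
            rw [hK]; ring
        _ ≤ K * (8 * (1 + (x - z) ^ 2)⁻¹ + 1 * (2 * S)) := by gcongr
        _ = _ := by ring
    · refine .of_forall fun x => ?_
      have hd := hδ.1
      simp only [Pi.zero_apply]
      positivity
  have ha0 : 0 < a := by linarith
  have hpre : ‖(α:ℂ) * greenSol a f z‖ = 1 / 2 * ‖∫ x in Set.Ici (0:ℝ),
      ((Real.exp (-(a * |x - z|)) - Real.exp (-(a * (x + z))) : ℝ) : ℂ) * f x‖ := by
    unfold greenSol
    rw [norm_mul, norm_mul, ← mul_assoc]
    congr 1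
    rw [norm_neg, norm_div, norm_mul, Complex.norm_real, Complex.norm_real, Real.norm_eq_abs,
      Real.norm_of_nonneg ha0.le, ← ha]
    simp
    field_simp
  rw [hpre]
  calc _ ≤ 1 / 2 * (K * (10 * Real.pi)) := by gcongr
    _ = 20 * Real.pi * a * (z / (1 + z)) * Real.exp (-(β * z)) * N := by rw [hK]; ring
    _ ≤ _ := by gcongr; linarith
end

section
/- For all real numbers γ' > γ > 0 there exists a constant C = C(γ, γ') such that for every ν ∈ (0,1] and every t > 0, ∫₀^t (√ν (t−s))^{−1/2} · e^{γ ν^{1/4}(t−s)} · √ν · s · e^{γ ν^{1/4} s} ds ≤ C ν^{−1/8} e^{γ' ν^{1/4} t}. -/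
/-- the singular Duhamel-type integral estimate
`∫₀^t (√ν(t−s))^{−1/2} e^{γν^{1/4}(t−s)} √ν s e^{γν^{1/4}s} ds ≤ C ν^{−1/8} e^{γ'ν^{1/4}t}`,
uniformly in `ν ∈ (0,1]` and `t > 0`, for any `γ' > γ > 0`. -/
theorem duhamel_singular_estimate (γ γ' : ℝ) (hγ : 0 < γ) (hγγ' : γ < γ') :
    ∃ C : ℝ, 0 < C ∧ ∀ ν ∈ Set.Ioc (0:ℝ) 1, ∀ t : ℝ, 0 < t →
      (∫ s in (0:ℝ)..t,
          (Real.sqrt ν * (t - s)) ^ (-(1:ℝ)/2) *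
            Real.exp (γ * ν ^ ((1:ℝ)/4) * (t - s)) * Real.sqrt ν * s *
            Real.exp (γ * ν ^ ((1:ℝ)/4) * s)) ≤
        C * ν ^ (-(1:ℝ)/8) * Real.exp (γ' * ν ^ ((1:ℝ)/4) * t) := by
  have hδ : 0 < γ' - γ := by linarith
  obtain ⟨δ, hδe⟩ : ∃ δ, δ = γ' - γ := ⟨_, rfl⟩
  rw [← hδe] at hδ
  refine ⟨2 * (1 / δ + 2 / δ ^ 2), by positivity, ?_⟩
  rintro ν ⟨hν, -⟩ t ht
  have ha : 0 < ν ^ ((1:ℝ)/4) := Real.rpow_pos_of_pos hν _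
  have h1 : Real.sqrt ν = (ν ^ ((1:ℝ)/4)) ^ (2:ℝ) := by
    rw [← Real.rpow_mul hν.le, Real.sqrt_eq_rpow]; norm_num
  have h2 : ν ^ (-(1:ℝ)/8) = (ν ^ ((1:ℝ)/4)) ^ (-(1:ℝ)/2) := by
    rw [← Real.rpow_mul hν.le]; norm_num
  rw [h1, h2]
  generalize ν ^ ((1:ℝ)/4) = a at ha
  have hcongr : (∫ s in (0:ℝ)..t,
          (a ^ (2:ℝ) * (t - s)) ^ (-(1:ℝ)/2) *
            Real.exp (γ * a * (t - s)) * a ^ (2:ℝ) * s *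
            Real.exp (γ * a * s)) =
      ∫ s in (0:ℝ)..t, (t - s) ^ (-(1:ℝ)/2) * (a * Real.exp (γ * a * t) * s) := by
    apply intervalIntegral.integral_congr
    intro s hs
    rw [Set.uIcc_of_le ht.le] at hs
    have e1 : (a ^ (2:ℝ)) ^ (-(1:ℝ)/2) = a⁻¹ := by
      rw [← Real.rpow_mul ha.le, ← Real.rpow_neg_one]; norm_num
    have e2 : Real.exp (γ * a * t) = Real.exp (γ * a * (t - s)) * Real.exp (γ * a * s) := by
      rw [← Real.exp_add]; ring_nf
    simp only
    rw [Real.mul_rpow (by positivity) (by linarith [hs.2]), e1, e2, Real.rpow_two]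
    field_simp
  rw [hcongr]
  have hI : IntervalIntegrable (fun s : ℝ => (t - s) ^ (-(1:ℝ)/2)) MeasureTheory.volume 0 t := by
    have := (intervalIntegral.intervalIntegrable_rpow' (a := 0) (b := t)
      (r := -(1:ℝ)/2) (by norm_num)).comp_sub_left t
    simpa using this.symm
  have hval : ∫ s in (0:ℝ)..t, (t - s) ^ (-(1:ℝ)/2) = 2 * t ^ ((1:ℝ)/2) := by
    rw [intervalIntegral.integral_comp_sub_left (fun x : ℝ => x ^ (-(1:ℝ)/2)) t,
      integral_rpow (by left; norm_num)]
    norm_num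
    ring
  have hle : (∫ s in (0:ℝ)..t, (t - s) ^ (-(1:ℝ)/2) * (a * Real.exp (γ * a * t) * s)) ≤
      ∫ s in (0:ℝ)..t, (t - s) ^ (-(1:ℝ)/2) * (a * Real.exp (γ * a * t) * t) := by
    apply intervalIntegral.integral_mono_on ht.le
    · exact hI.mul_continuousOn (by fun_prop)
    · exact hI.mul_const _
    · intro s hs
      have : 0 ≤ (t - s) ^ (-(1:ℝ)/2) := Real.rpow_nonneg (by linarith [hs.2]) _
      have := hs.2
      gcongr
  rw [intervalIntegral.integral_mul_const, hval] at hle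
  refine hle.trans ?_
  have ex : Real.exp (γ' * a * t) = Real.exp (γ * a * t) * Real.exp (δ * (a * t)) := by
    rw [← Real.exp_add, hδe]; ring_nf
  have et : t ^ ((1:ℝ)/2) = (a * t) ^ ((1:ℝ)/2) * a ^ (-(1:ℝ)/2) := by
    rw [Real.mul_rpow ha.le ht.le, mul_right_comm, ← Real.rpow_add ha]; norm_num
  rw [ex, et]
  obtain ⟨x, hx⟩ : ∃ x, x = a * t := ⟨_, rfl⟩
  have hx0 : 0 < x := by rw [hx]; positivity
  have key : x ^ ((1:ℝ)/2) * x ≤ (1 / δ + 2 / δ ^ 2) * Real.exp (δ * x) := by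
    have q := Real.quadratic_le_exp_of_nonneg (x := δ * x) (by positivity)
    have r : x ^ ((1:ℝ)/2) ≤ 1 + x := by
      rw [← Real.sqrt_eq_rpow]
      exact Real.sqrt_le_iff.2 ⟨by linarith, by nlinarith⟩
    have b1 : x ≤ 1 / δ * Real.exp (δ * x) := by
      rw [one_div, inv_mul_eq_div, le_div_iff₀ hδ]
      nlinarith [sq_nonneg (δ * x)]
    have b2 : x ^ 2 ≤ 2 / δ ^ 2 * Real.exp (δ * x) := by
      rw [div_mul_eq_mul_div, le_div_iff₀ (by positivity)]
      nlinarith [mul_pos hδ hx0]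
    nlinarith
  have hp : 0 ≤ 2 * a ^ (-(1:ℝ)/2) * Real.exp (γ * a * t) := by positivity
  have := mul_le_mul_of_nonneg_left key hp
  rw [hx] at this
  calc _ = 2 * a ^ (-(1:ℝ)/2) * Real.exp (γ * a * t) * ((a * t) ^ ((1:ℝ)/2) * (a * t)) := by ring
    _ ≤ _ := this
    _ = _ := by ring
end
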